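/- Let d ≥ 2 be an integer. There exists a constant C, depending only on d, such that for all integers n ≥ d and m ≥ 2, the standardized number W_{n,m} of urns containing exactly d balls in the uniform occupancy model satisfies sup_{z ∈ ℝ} |P(W_{n,m} ≤ z) − P(Z ≤ z)| ≤ C / r_{n,m}, where r_{n,m} = σ_{n,m}/(1 + (n/m)³). -/

import Mathlib

open MeasureTheory ProbabilityTheory Filter

/-- The uniform occupancy model: `n` balls are placed independently and uniformly at
random into `m` urns; an outcome assigns to each ball its urn. -/
noncomputable def occ (n m : ℕ) : Measure (Fin n → Fin m) :=
  (Fintype.card (Fin n → Fin m) : ENNReal)⁻¹ • Measure.count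

/-- The number of balls in urn `i`. -/
def ballCount {n m : ℕ} (ω : Fin n → Fin m) (i : Fin m) : ℕ :=
  (Finset.univ.filter fun b => ω b = i).card

/-- The number of urns containing exactly `d` balls. -/
def urnCount (d : ℕ) {n m : ℕ} (ω : Fin n → Fin m) : ℕ :=
  (Finset.univ.filter fun i => ballCount ω i = d).card

/-- `μ_{n,m}`, the mean number of urns containing exactly `d` balls. -/
noncomputable def occMean (d n m : ℕ) : ℝ :=
  ∫ ω, (urnCount d ω : ℝ) ∂(occ n m)

/-- `σ²_{n,m}`, the variance of the number of urns containing exactly `d` balls. -/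
noncomputable def occVar (d n m : ℕ) : ℝ :=
  variance (fun ω => (urnCount d ω : ℝ)) (occ n m)

/-- `r_{n,m} = σ_{n,m} / (1 + (n/m)³)`. -/
noncomputable def occR (d n m : ℕ) : ℝ :=
  Real.sqrt (occVar d n m) / (1 + ((n : ℝ) / m) ^ 3)

/-- The standard normal distribution function `P(Z ≤ z)`. -/
noncomputable def stdGaussCDF (z : ℝ) : ℝ :=
  (gaussianReal 0 1 (Set.Iic z)).toReal

/-- `P(W_{n,m} ≤ z) − P(Z ≤ z)`, where `W_{n,m}` is the standardized count. -/
noncomputable def occKolm (d n m : ℕ) (z : ℝ) : ℝ :=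
  ((occ n m) {ω | ((urnCount d ω : ℝ) - occMean d n m) / Real.sqrt (occVar d n m) ≤ z}).toReal
    - stdGaussCDF z

/-!
Stein's method with exchangeable pairs in its "antisymmetric functional" form. Moving a uniformly
chosen ball to a uniformly chosen urn gives a reversible chain on configurations. On sums
`∑ i, φ (M i)` over the urns its Laplacian acts through the birth–death chain of a single urn, so
that solving the Stein equation of that chain, whose stationary law is binomial, produces a `G` with
Laplacian equal to the centred count `Y - 𝔼 Y`. With such a `G` the distance of `Y` to the normal
law is governed by the standard deviations of the carré du champ of `G` and `Y` and of the Laplacian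
of `Y`, the latter weighted by the largest jump of `G`.

Both variances are bounded by Efron–Stein, i.e. by the Dirichlet form of the same chain: the two
functions are built from summands supported on occupation numbers in `{d - 1, d, d + 1}`, and so are
at most of order `m * ℙ(M = d) * (1 + n / m) ^ 4`. Conversely, the variance of `Y` is at least
`m * ℙ(M = d) / 6`: group the urns into disjoint pairs and, given the total content of each pair,
resplit it fairly between its two urns.
-/

open scoped BigOperators fwdDiff NNReal

/-! ### The Gaussian distribution function -/

lemma hasDerivAt_gaussianPDFReal (μ : ℝ) (v : ℝ≥0) (x : ℝ) :
    HasDerivAt (gaussianPDFReal μ v) (-((x - μ) / v) * gaussianPDFReal μ v x) x := by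
  have h : HasDerivAt (fun y : ℝ => -(y - μ) ^ 2 / (2 * v)) (-((x - μ) / v)) x := by
    refine ((((hasDerivAt_id x).sub_const μ).pow 2).neg.div_const (2 * (v : ℝ))).congr_deriv ?_
    simp only [id, Nat.cast_ofNat, mul_one, Nat.add_one_sub_one, pow_one]
    ring
  refine (h.exp.const_mul (√(2 * Real.pi * v))⁻¹).congr_deriv ?_
  rw [gaussianPDFReal]
  ring

lemma continuous_gaussianPDFReal (μ : ℝ) (v : ℝ≥0) : Continuous (gaussianPDFReal μ v) :=
  continuous_iff_continuousAt.2 fun x => (hasDerivAt_gaussianPDFReal μ v x).continuousAt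

lemma gaussianPDFReal_zero_neg (v : ℝ≥0) (x : ℝ) :
    gaussianPDFReal 0 v (-x) = gaussianPDFReal 0 v x := by
  simp [gaussianPDFReal]

lemma tendsto_pow_mul_gaussianPDFReal_atBot {v : ℝ≥0} (hv : v ≠ 0) (k : ℕ) :
    Tendsto (fun x => x ^ k * gaussianPDFReal 0 v x) atBot (nhds 0) := by
  have : (0 : ℝ) < v := NNReal.coe_pos.2 (pos_iff_ne_zero.2 hv)
  have h := ((tendsto_rpow_abs_mul_exp_neg_mul_sq_cocompact
    (a := (2 * (v : ℝ))⁻¹) (by positivity) k).mono_left atBot_le_cocompact).const_mul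
      (√(2 * Real.pi * v))⁻¹
  rw [mul_zero] at h
  refine squeeze_zero_norm (fun x => le_of_eq ?_) h
  rw [gaussianPDFReal, norm_mul, norm_mul, norm_pow, Real.norm_eq_abs, Real.norm_eq_abs,
    Real.norm_eq_abs, Real.abs_exp, abs_of_nonneg (inv_nonneg.2 (Real.sqrt_nonneg _)),
    Real.rpow_natCast, sub_zero]
  ring_nf

lemma hasDerivAt_cdf_gaussianReal (μ : ℝ) {v : ℝ≥0} (hv : v ≠ 0) (x : ℝ) :
    HasDerivAt (cdf (gaussianReal μ v)) (gaussianPDFReal μ v x) x := by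
  have hi := integrable_gaussianPDFReal μ v
  have hc := continuous_gaussianPDFReal μ v
  have hcdf (y : ℝ) : cdf (gaussianReal μ v) y = ∫ t in Set.Iic y, gaussianPDFReal μ v t := by
    rw [cdf_eq_real, Measure.real, gaussianReal_apply_eq_integral _ hv, ENNReal.toReal_ofReal]
    exact setIntegral_nonneg measurableSet_Iic fun t _ => gaussianPDFReal_nonneg μ v t
  refine ((intervalIntegral.integral_hasDerivAt_right (hi.intervalIntegrable (a := 0) (b := x))
    (hc.stronglyMeasurableAtFilter _ _) hc.continuousAt).const_add
      (cdf (gaussianReal μ v) 0)).congr_of_eventuallyEq (Eventually.of_forall fun y => ?_)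
  simp only [hcdf, ← intervalIntegral.integral_Iic_sub_Iic hi.integrableOn hi.integrableOn,
    add_sub_cancel]

lemma cdf_gaussianReal_neg (μ : ℝ) {v : ℝ≥0} (hv : v ≠ 0) (x : ℝ) :
    cdf (gaussianReal (-μ) v) (-x) = 1 - cdf (gaussianReal μ v) x := by
  have := nullSingletonClass_gaussianReal (μ := μ) hv
  have hpre : (fun y : ℝ => -y) ⁻¹' Set.Iic (-x) = Set.Ici x := by ext y; simp
  rw [cdf_eq_real, cdf_eq_real, ← probReal_compl_eq_one_sub measurableSet_Iic, Set.compl_Iic,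
    ← gaussianReal_map_neg, map_measureReal_apply measurable_neg measurableSet_Iic, hpre]
  exact (measureReal_congr Ioi_ae_eq_Ici).symm

local notation "gaussPDF" => gaussianPDFReal 0 1

lemma gaussPDF_pos (x : ℝ) : 0 < gaussPDF x :=
  gaussianPDFReal_pos 0 1 x one_ne_zero

lemma hasDerivAt_gaussPDF (x : ℝ) : HasDerivAt gaussPDF (-(x * gaussPDF x)) x :=
  (hasDerivAt_gaussianPDFReal 0 1 x).congr_deriv (by simp)

lemma tendsto_pow_mul_gaussPDF_atBot (k : ℕ) :
    Tendsto (fun x => x ^ k * gaussPDF x) atBot (nhds 0) :=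
  tendsto_pow_mul_gaussianPDFReal_atBot one_ne_zero k

lemma stdGaussCDF_eq_cdf : stdGaussCDF = cdf (gaussianReal 0 1) :=
  funext fun z => (cdf_eq_real _ z).symm

lemma stdGaussCDF_nonneg (z : ℝ) : 0 ≤ stdGaussCDF z := ENNReal.toReal_nonneg

lemma stdGaussCDF_le_one (z : ℝ) : stdGaussCDF z ≤ 1 := by
  rw [stdGaussCDF_eq_cdf]
  exact cdf_le_one _ z

lemma monotone_stdGaussCDF : Monotone stdGaussCDF := by
  rw [stdGaussCDF_eq_cdf]
  exact monotone_cdf _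

lemma tendsto_stdGaussCDF_atBot : Tendsto stdGaussCDF atBot (nhds 0) := by
  rw [stdGaussCDF_eq_cdf]
  exact tendsto_cdf_atBot _

lemma hasDerivAt_stdGaussCDF (z : ℝ) : HasDerivAt stdGaussCDF (gaussPDF z) z := by
  rw [stdGaussCDF_eq_cdf]
  exact hasDerivAt_cdf_gaussianReal 0 one_ne_zero z

lemma stdGaussCDF_neg (z : ℝ) : stdGaussCDF (-z) = 1 - stdGaussCDF z := by
  simpa [stdGaussCDF_eq_cdf] using cdf_gaussianReal_neg 0 one_ne_zero z

lemma nonneg_of_monotoneOn_of_tendsto_atBot {f : ℝ → ℝ} {w : ℝ}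
    (hf : MonotoneOn f (Set.Iic w)) (hlim : Tendsto f atBot (nhds 0)) : 0 ≤ f w :=
  le_of_tendsto hlim <| (eventually_le_atBot w).mono fun _ hx => hf hx Set.self_mem_Iic hx

lemma mul_stdGaussCDF_add_gaussPDF_nonneg (w : ℝ) : 0 ≤ w * stdGaussCDF w + gaussPDF w := by
  have hd (x : ℝ) : HasDerivAt (fun x => w * stdGaussCDF x + gaussPDF x)
      ((w - x) * gaussPDF x) x :=
    (((hasDerivAt_stdGaussCDF x).const_mul w).add (hasDerivAt_gaussPDF x)).congr_deriv (by ring)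
  refine nonneg_of_monotoneOn_of_tendsto_atBot (f := fun x => w * stdGaussCDF x + gaussPDF x) ?_ ?_
  · refine monotoneOn_of_deriv_nonneg (convex_Iic w) (HasDerivAt.continuousOn fun x _ => hd x)
      (fun x _ => (hd x).differentiableAt.differentiableWithinAt) fun x hx => ?_
    rw [(hd x).deriv]
    exact mul_nonneg (sub_nonneg.2 (Set.mem_Iic.1 (interior_subset hx))) (gaussPDF_pos x).le
  · simpa using (tendsto_stdGaussCDF_atBot.const_mul w).add (tendsto_pow_mul_gaussPDF_atBot 0)

lemma one_add_sq_mul_stdGaussCDF_add_nonneg (w : ℝ) :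
    0 ≤ (1 + w ^ 2) * stdGaussCDF w + w * gaussPDF w := by
  set f : ℝ → ℝ := fun x => (1 + w ^ 2) * stdGaussCDF x + 2 * w * gaussPDF x - x * gaussPDF x
    with hf
  have hd (x : ℝ) : HasDerivAt f ((w - x) ^ 2 * gaussPDF x) x :=
    ((((hasDerivAt_stdGaussCDF x).const_mul (1 + w ^ 2)).add
      ((hasDerivAt_gaussPDF x).const_mul (2 * w))).sub
      ((hasDerivAt_id x).mul (hasDerivAt_gaussPDF x))).congr_deriv (by simp only [id]; ring)
  have hmono : Monotone f := monotone_of_deriv_nonneg (fun x => (hd x).differentiableAt) fun x => by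
    rw [(hd x).deriv]
    exact mul_nonneg (sq_nonneg _) (gaussPDF_pos x).le
  have hlim : Tendsto f atBot (nhds 0) := by
    simpa using ((tendsto_stdGaussCDF_atBot.const_mul (1 + w ^ 2)).add
      ((tendsto_pow_mul_gaussPDF_atBot 0).const_mul (2 * w))).sub (tendsto_pow_mul_gaussPDF_atBot 1)
  calc 0 ≤ f w := nonneg_of_monotoneOn_of_tendsto_atBot (hmono.monotoneOn _) hlim
    _ = (1 + w ^ 2) * stdGaussCDF w + w * gaussPDF w := by rw [hf]; ring

/-! ### The solution of Stein's equation -/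

/-- The Mills ratio `Φ / Φ'` of the lower Gaussian tail. -/
noncomputable def millsRatio (w : ℝ) : ℝ := stdGaussCDF w / gaussPDF w

lemma millsRatio_nonneg (w : ℝ) : 0 ≤ millsRatio w :=
  div_nonneg (stdGaussCDF_nonneg w) (gaussPDF_pos w).le

lemma hasDerivAt_millsRatio (w : ℝ) : HasDerivAt millsRatio (1 + w * millsRatio w) w := by
  have hp := (gaussPDF_pos w).ne'
  refine ((hasDerivAt_stdGaussCDF w).div (hasDerivAt_gaussPDF w) hp).congr_deriv ?_
  rw [millsRatio]
  field_simp
  ring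

lemma continuous_millsRatio : Continuous millsRatio :=
  continuous_iff_continuousAt.2 fun w => (hasDerivAt_millsRatio w).continuousAt

lemma neg_mul_millsRatio_le_one (w : ℝ) : -(w * millsRatio w) ≤ 1 := by
  have := mul_stdGaussCDF_add_gaussPDF_nonneg w
  rw [millsRatio, ← mul_div_assoc, ← neg_div, div_le_one (gaussPDF_pos w)]
  linarith

lemma monotone_mul_millsRatio : Monotone fun w => w * millsRatio w := by
  have hd (w : ℝ) := (hasDerivAt_id w).mul (hasDerivAt_millsRatio w)
  refine monotone_of_deriv_nonneg (fun w => (hd w).differentiableAt) fun w => ?_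
  have hderiv : 1 * millsRatio w + w * (1 + w * millsRatio w)
      = ((1 + w ^ 2) * stdGaussCDF w + w * gaussPDF w) / gaussPDF w := by
    have hp := (gaussPDF_pos w).ne'
    rw [millsRatio]
    field_simp
    ring
  refine le_of_le_of_eq ?_ ((hd w).deriv.trans hderiv).symm
  exact div_nonneg (one_add_sq_mul_stdGaussCDF_add_nonneg w) (gaussPDF_pos w).le

lemma one_sub_stdGaussCDF_mul_millsRatio (w : ℝ) :
    (1 - stdGaussCDF w) * millsRatio w = stdGaussCDF w * millsRatio (-w) := by
  rw [millsRatio, millsRatio, stdGaussCDF_neg, gaussianPDFReal_zero_neg]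
  ring

lemma abs_mul_mul_millsRatio_le_one {a b : ℝ} (hb : 0 ≤ b) (hba : b ≤ 1 - stdGaussCDF a) :
    |a * (b * millsRatio a)| ≤ 1 := by
  have hR := millsRatio_nonneg a
  have hΦ := stdGaussCDF_nonneg a
  rcases le_total 0 a with ha | ha
  · rw [abs_of_nonneg (by positivity)]
    calc a * (b * millsRatio a) ≤ a * ((1 - stdGaussCDF a) * millsRatio a) := by gcongr
      _ = stdGaussCDF a * -(-a * millsRatio (-a)) := by
        rw [one_sub_stdGaussCDF_mul_millsRatio]
        ring
      _ ≤ 1 := mul_le_one₀ (stdGaussCDF_le_one a)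
        (by linarith [mul_nonneg ha (millsRatio_nonneg (-a))]) (neg_mul_millsRatio_le_one (-a))
  · have h0 : 0 ≤ -(a * millsRatio a) := by linarith [mul_nonneg (neg_nonneg.2 ha) hR]
    rw [mul_left_comm, ← abs_neg, ← mul_neg, abs_of_nonneg (by positivity)]
    exact mul_le_one₀ (by linarith) h0 (neg_mul_millsRatio_le_one a)

/-- The bounded solution `f` of Stein's equation `f' w - w * f w = 1_{w ≤ z} - Φ z`. -/
noncomputable def steinSol (z w : ℝ) : ℝ :=
  if w ≤ z then (1 - stdGaussCDF z) * millsRatio w else stdGaussCDF z * millsRatio (-w)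

lemma steinSol_of_le {z w : ℝ} (h : w ≤ z) : steinSol z w = (1 - stdGaussCDF z) * millsRatio w :=
  if_pos h

lemma steinSol_of_ge {z w : ℝ} (h : z ≤ w) : steinSol z w = stdGaussCDF z * millsRatio (-w) := by
  rcases h.eq_or_lt with rfl | h
  · rw [steinSol, if_pos le_rfl, one_sub_stdGaussCDF_mul_millsRatio]
  · rw [steinSol, if_neg h.not_ge]

lemma continuous_steinSol (z : ℝ) : Continuous (steinSol z) := by
  refine Continuous.if_le (continuous_const.mul continuous_millsRatio)
    (continuous_const.mul (continuous_millsRatio.comp continuous_neg)) continuous_id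
    continuous_const fun w hw => ?_
  rw [show w = z from hw, one_sub_stdGaussCDF_mul_millsRatio]

lemma monotone_mul_steinSol (z : ℝ) : Monotone fun w => w * steinSol z w := by
  refine MonotoneOn.Iic_union_Ici (a := z) (fun x hx y hy hxy => ?_) fun x hx y hy hxy => ?_
  · simp only [steinSol_of_le hx, steinSol_of_le hy, mul_left_comm _ (1 - stdGaussCDF z)]
    exact mul_le_mul_of_nonneg_left (monotone_mul_millsRatio hxy)
      (sub_nonneg.2 (stdGaussCDF_le_one z))
  · simp only [steinSol_of_ge hx, steinSol_of_ge hy, mul_left_comm _ (stdGaussCDF z)]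
    have h := mul_le_mul_of_nonneg_left (monotone_mul_millsRatio (neg_le_neg hxy))
      (stdGaussCDF_nonneg z)
    linarith only [h]

lemma abs_mul_steinSol_le_one (z w : ℝ) : |w * steinSol z w| ≤ 1 := by
  rcases le_total w z with h | h
  · rw [steinSol_of_le h]
    exact abs_mul_mul_millsRatio_le_one (sub_nonneg.2 (stdGaussCDF_le_one z))
      (by linarith [monotone_stdGaussCDF h])
  · rw [steinSol_of_ge h, ← abs_neg, ← neg_mul]
    exact abs_mul_mul_millsRatio_le_one (stdGaussCDF_nonneg z)
      (by linarith [monotone_stdGaussCDF h, stdGaussCDF_neg w])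

/-- The derivative of `steinSol z`, read off from Stein's equation; at the kink `w = z` it is the
left derivative. -/
noncomputable def steinDeriv (z w : ℝ) : ℝ :=
  w * steinSol z w + (if w ≤ z then 1 else 0) - stdGaussCDF z

lemma abs_steinDeriv_le_two (z w : ℝ) : |steinDeriv z w| ≤ 2 := by
  have h := abs_le.1 (abs_mul_steinSol_le_one z w)
  have h0 := stdGaussCDF_nonneg z
  have h1 := stdGaussCDF_le_one z
  rw [steinDeriv, abs_le]
  split_ifs <;> constructor <;> linarith

/-- A monotone function whose increments control the increments of `steinDeriv z`: the jump of the
indicator enters with the opposite sign. -/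
noncomputable def steinModulus (z w : ℝ) : ℝ :=
  w * steinSol z w - if w ≤ z then 1 else 0

lemma abs_steinModulus_le_two (z w : ℝ) : |steinModulus z w| ≤ 2 := by
  have h := abs_le.1 (abs_mul_steinSol_le_one z w)
  rw [steinModulus, abs_le]
  split_ifs <;> constructor <;> linarith

-- Away from `z` this is Stein's equation; subtracting `min w z` removes the jump of the derivative.
lemma hasDerivAt_steinSol_sub_min (z w : ℝ) :
    HasDerivAt (fun w => steinSol z w - min w z + stdGaussCDF z * w) (w * steinSol z w) w := by
  have hne (y : ℝ) (hy : y ≠ z) :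
      HasDerivAt (fun w => steinSol z w - min w z + stdGaussCDF z * w) (y * steinSol z y) y := by
    have hΦ := (hasDerivAt_id y).const_mul (stdGaussCDF z)
    rcases hy.lt_or_gt with hy | hy
    · have h := (((hasDerivAt_millsRatio y).const_mul (1 - stdGaussCDF z)).sub
        (hasDerivAt_id y)).add hΦ
      rw [steinSol_of_le hy.le]
      refine (h.congr_of_eventuallyEq ?_).congr_deriv (by ring)
      filter_upwards [Iio_mem_nhds hy] with x hx
      simp [steinSol_of_le (Set.mem_Iio.1 hx).le, (Set.mem_Iio.1 hx).le]
    · have h := ((((hasDerivAt_millsRatio (-y)).comp y (hasDerivAt_neg y)).const_mul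
        (stdGaussCDF z)).sub (hasDerivAt_const y z)).add hΦ
      rw [steinSol_of_ge hy.le]
      refine (h.congr_of_eventuallyEq ?_).congr_deriv (by ring)
      filter_upwards [Ioi_mem_nhds hy] with x hx
      simp [steinSol_of_ge (Set.mem_Ioi.1 hx).le, (Set.mem_Ioi.1 hx).le]
  rcases eq_or_ne w z with rfl | hw
  · have hc := continuous_steinSol w
    exact hasDerivAt_of_hasDerivAt_of_ne hne (Continuous.continuousAt (by fun_prop))
      (continuous_id.mul hc).continuousAt
  · exact hne w hw

lemma mul_sub_le_sub_of_convexOn {S : Set ℝ} {f : ℝ → ℝ} {f' x y : ℝ} (hf : ConvexOn ℝ S f)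
    (hx : x ∈ S) (hy : y ∈ S) (hf' : HasDerivAt f f' x) : f' * (y - x) ≤ f y - f x := by
  rcases lt_trichotomy x y with hxy | rfl | hxy
  · have h := hf.le_slope_of_hasDerivAt hx hy hxy hf'
    rwa [slope_def_field, le_div_iff₀ (sub_pos.2 hxy)] at h
  · simp
  · have h := hf.slope_le_of_hasDerivAt hy hx hxy hf'
    rw [slope_def_field, div_le_iff₀ (sub_pos.2 hxy)] at h
    linarith

-- The two parts of `steinSol z`, split off at the kink, are convex and concave respectively.
lemma abs_steinSol_sub_sub_le (z a b : ℝ) :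
    |steinSol z b - steinSol z a - steinDeriv z a * (b - a)|
      ≤ (b - a) * (steinModulus z b - steinModulus z a) := by
  have hd := hasDerivAt_steinSol_sub_min z
  have hconvex : ConvexOn ℝ Set.univ fun w => steinSol z w - min w z + stdGaussCDF z * w := by
    refine Monotone.convexOn_univ_of_deriv (fun w => (hd w).differentiableAt) ?_
    rw [funext fun w => (hd w).deriv]
    exact monotone_mul_steinSol z
  have hab := mul_sub_le_sub_of_convexOn hconvex trivial (Set.mem_univ b) (hd a)
  have hba := mul_sub_le_sub_of_convexOn hconvex trivial (Set.mem_univ a) (hd b)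
  have hmin : (b - a) * ((if b ≤ z then 1 else 0) - (if a ≤ z then (1 : ℝ) else 0))
      ≤ min b z - min a z - (if a ≤ z then 1 else 0) * (b - a)
      ∧ min b z - min a z - (if a ≤ z then (1 : ℝ) else 0) * (b - a) ≤ 0 := by
    rcases le_total a z with ha | ha <;> rcases le_total b z with hb | hb <;>
      simp only [min_eq_left, min_eq_right, ha, hb] <;> split_ifs <;>
      constructor <;> nlinarith
  simp only [steinDeriv, steinModulus, abs_le]
  constructor <;> linarith [hmin.1, hmin.2]

/-! ### Stein's method for reversible moves -/

section ReversibleMoves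

variable {Ω ι : Type*} [Fintype Ω] [Fintype ι]

/-- Variance of `f` under the uniform distribution on a finite type. -/
noncomputable def uniformVar (f : Ω → ℝ) : ℝ := 𝔼 x, (f x - 𝔼 y, f y) ^ 2

/-- Minus the (unnormalized) generator of the random walk `x ↦ s x i` with uniform `i`. -/
noncomputable def moveLaplacian {Ω : Type*} (s : Ω → ι → Ω) (f : Ω → ℝ) (x : Ω) : ℝ :=
  ∑ i, (f x - f (s x i))

/-- The (unnormalized) carré du champ operator of the random walk `x ↦ s x i` with uniform `i`. -/
noncomputable def carreDuChamp {Ω : Type*} (s : Ω → ι → Ω) (f g : Ω → ℝ) (x : Ω) : ℝ :=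
  ∑ i, (f x - f (s x i)) * (g x - g (s x i))

/-- The moves `x ↦ s x i` are reversible if a uniform point and its image under a uniform move form
an exchangeable pair. -/
def ReversibleMoves (s : Ω → ι → Ω) : Prop :=
  ∀ H : Ω → Ω → ℝ, ∑ x, ∑ i, H x (s x i) = ∑ x, ∑ i, H (s x i) x

namespace ReversibleMoves

variable {s : Ω → ι → Ω}

lemma expect_carreDuChamp (hs : ReversibleMoves s) (f g : Ω → ℝ) :
    𝔼 x, carreDuChamp s f g x = 2 * 𝔼 x, moveLaplacian s f x * g x := by
  have hx (x : Ω) : carreDuChamp s f g x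
      = ∑ i, (f x - f (s x i)) * g x + ∑ i, (f (s x i) - f x) * g (s x i) := by
    rw [← Finset.sum_add_distrib]
    exact Finset.sum_congr rfl fun i _ => by ring
  simp only [Finset.expect_eq_sum_div_card, hx, Finset.sum_add_distrib, moveLaplacian,
    Finset.sum_mul]
  rw [hs fun x y => (f x - f y) * g x]
  ring

lemma expect_moveLaplacian (hs : ReversibleMoves s) (f : Ω → ℝ) :
    𝔼 x, moveLaplacian s f x = 0 := by
  simpa [carreDuChamp] using (hs.expect_carreDuChamp f fun _ => 1).symm

lemma abs_expect_sum_mul_le (hs : ReversibleMoves s) {G W κ : Ω → ℝ} {R : Ω → Ω → ℝ} {K c : ℝ}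
    (hK0 : 0 ≤ K) (hK : ∀ x i, |G x - G (s x i)| ≤ K) (hκ : ∀ x, |κ x| ≤ c)
    (hR : ∀ x y, |R x y| ≤ (W x - W y) * (κ x - κ y)) :
    |𝔼 x, ∑ i, (G x - G (s x i)) * R x (s x i)| ≤ 2 * K * c * 𝔼 x, |moveLaplacian s W x| := by
  calc |𝔼 x, ∑ i, (G x - G (s x i)) * R x (s x i)|
      ≤ 𝔼 x, K * carreDuChamp s W κ x := by
        refine (Finset.abs_expect_le _ _).trans (Finset.expect_le_expect fun x _ => ?_)
        rw [carreDuChamp, Finset.mul_sum]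
        refine (Finset.abs_sum_le_sum_abs _ _).trans (Finset.sum_le_sum fun i _ => ?_)
        rw [abs_mul]
        exact mul_le_mul (hK x i) (hR x (s x i)) (abs_nonneg _) hK0
    _ = 2 * K * 𝔼 x, moveLaplacian s W x * κ x := by
        rw [← Finset.mul_expect, hs.expect_carreDuChamp]
        ring
    _ ≤ 2 * K * 𝔼 x, |moveLaplacian s W x| * c := by
        refine mul_le_mul_of_nonneg_left (Finset.expect_le_expect fun x _ => ?_) (by positivity)
        refine (le_abs_self _).trans ?_
        rw [abs_mul]
        exact mul_le_mul_of_nonneg_left (hκ x) (abs_nonneg _)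
    _ = 2 * K * c * 𝔼 x, |moveLaplacian s W x| := by
        rw [← Finset.expect_mul]
        ring

lemma two_mul_expect_sub_stdGaussCDF (hs : ReversibleMoves s) {W G : Ω → ℝ}
    (hG : ∀ x, moveLaplacian s G x = W x) (z : ℝ) :
    2 * 𝔼 x, ((if W x ≤ z then 1 else 0) - stdGaussCDF z)
      = 𝔼 x, steinDeriv z (W x) * (2 - carreDuChamp s G W x)
        + 𝔼 x, ∑ i, (G x - G (s x i)) * (steinSol z (W (s x i)) - steinSol z (W x)
            - steinDeriv z (W x) * (W (s x i) - W x)) := by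
  have hparts := hs.expect_carreDuChamp G fun x => steinSol z (W x)
  have hx (x : Ω) : ∑ i, (G x - G (s x i)) * (steinSol z (W (s x i)) - steinSol z (W x)
        - steinDeriv z (W x) * (W (s x i) - W x))
      = steinDeriv z (W x) * carreDuChamp s G W x
        - carreDuChamp s G (fun x => steinSol z (W x)) x := by
    simp only [carreDuChamp, Finset.mul_sum, ← Finset.sum_sub_distrib]
    exact Finset.sum_congr rfl fun i _ => by ring
  simp only [hG] at hparts
  simp only [hx, Finset.expect_sub_distrib, hparts]
  rw [← Finset.expect_sub_distrib, Finset.mul_expect, Finset.mul_expect, ← add_sub_assoc,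
    ← Finset.expect_add_distrib, ← Finset.expect_sub_distrib]
  exact Finset.expect_congr rfl fun x _ => by rw [steinDeriv]; ring

variable [Nonempty Ω]

theorem abs_expect_sub_stdGaussCDF_le (hs : ReversibleMoves s) {W G : Ω → ℝ} {K : ℝ} (hK0 : 0 ≤ K)
    (hG : ∀ x, moveLaplacian s G x = W x) (hK : ∀ x i, |G x - G (s x i)| ≤ K) (z : ℝ) :
    |(𝔼 x, if W x ≤ z then (1 : ℝ) else 0) - stdGaussCDF z|
      ≤ 𝔼 x, |2 - carreDuChamp s G W x| + 2 * K * 𝔼 x, |moveLaplacian s W x| := by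
  have hmain : |𝔼 x, steinDeriv z (W x) * (2 - carreDuChamp s G W x)|
      ≤ 2 * 𝔼 x, |2 - carreDuChamp s G W x| := by
    rw [Finset.mul_expect]
    refine (Finset.abs_expect_le _ _).trans (Finset.expect_le_expect fun x _ => ?_)
    rw [abs_mul]
    exact mul_le_mul_of_nonneg_right (abs_steinDeriv_le_two z _) (abs_nonneg _)
  have hrem := hs.abs_expect_sum_mul_le hK0 hK (fun x => abs_steinModulus_le_two z (W x))
    (R := fun x y => steinSol z (W y) - steinSol z (W x) - steinDeriv z (W x) * (W y - W x))
    (W := W) fun x y => (abs_steinSol_sub_sub_le z (W x) (W y)).trans_eq (by ring)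
  have hadd := abs_add_le (𝔼 x, steinDeriv z (W x) * (2 - carreDuChamp s G W x))
    (𝔼 x, ∑ i, (G x - G (s x i)) * (steinSol z (W (s x i)) - steinSol z (W x)
      - steinDeriv z (W x) * (W (s x i) - W x)))
  rw [← hs.two_mul_expect_sub_stdGaussCDF hG, abs_mul, abs_two, Finset.expect_sub_distrib,
    Fintype.expect_const] at hadd
  linarith

lemma expect_carreDuChamp_eq_two_mul_uniformVar (hs : ReversibleMoves s) {Y G : Ω → ℝ}
    (hG : ∀ x, moveLaplacian s G x = Y x - 𝔼 y, Y y) :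
    𝔼 x, carreDuChamp s G Y x = 2 * uniformVar Y := by
  have hzero : 𝔼 x, (Y x - 𝔼 y, Y y) * 𝔼 y, Y y = 0 := by
    rw [← Finset.expect_mul, Finset.expect_sub_distrib, Fintype.expect_const, sub_self, zero_mul]
  rw [hs.expect_carreDuChamp, uniformVar, ← sub_zero (𝔼 x, _ * Y x), ← hzero,
    ← Finset.expect_sub_distrib]
  exact congrArg _ (Finset.expect_congr rfl fun x _ => by rw [hG]; ring)

end ReversibleMoves

lemma expect_abs_le_sqrt [Nonempty Ω] (f : Ω → ℝ) : 𝔼 x, |f x| ≤ √(𝔼 x, f x ^ 2) := by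
  apply Real.le_sqrt_of_sq_le
  simpa using Finset.expect_mul_sq_le_sq_mul_sq Finset.univ (fun x => |f x|) (fun _ => 1)

theorem ReversibleMoves.abs_expect_sub_stdGaussCDF_le_sqrt [Nonempty Ω] {s : Ω → ι → Ω}
    (hs : ReversibleMoves s) {Y G : Ω → ℝ} {K : ℝ} (hV : 0 < uniformVar Y) (hK0 : 0 ≤ K)
    (hG : ∀ x, moveLaplacian s G x = Y x - 𝔼 y, Y y) (hK : ∀ x i, |G x - G (s x i)| ≤ K) (z : ℝ) :
    |(𝔼 x, if (Y x - 𝔼 y, Y y) / √(uniformVar Y) ≤ z then (1 : ℝ) else 0) - stdGaussCDF z|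
      ≤ (√(uniformVar (carreDuChamp s G Y)) + 2 * K * √(uniformVar (moveLaplacian s Y)))
        / uniformVar Y := by
  set V := uniformVar Y with hVdef
  set σ := √V
  have hσ : 0 < σ := Real.sqrt_pos.2 hV
  have hσσ : σ * σ = V := Real.mul_self_sqrt hV.le
  set W : Ω → ℝ := fun x => (Y x - 𝔼 y, Y y) / σ with hW
  have hΔW (x y : Ω) : W x - W y = (Y x - Y y) / σ := by rw [hW]; ring
  have hLG (x : Ω) : moveLaplacian s (fun x => G x / σ) x = W x := by
    simp only [moveLaplacian, ← sub_div, ← Finset.sum_div]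
    exact congrArg (· / σ) (hG x)
  have hLW (x : Ω) : |moveLaplacian s W x| = |moveLaplacian s Y x| / σ := by
    simp only [moveLaplacian, hΔW, ← Finset.sum_div, abs_div, abs_of_pos hσ]
  have hΓ (x : Ω) : |2 - carreDuChamp s (fun x => G x / σ) W x|
      = |carreDuChamp s G Y x - 2 * V| / V := by
    simp only [carreDuChamp, hΔW, ← sub_div, div_mul_div_comm, hσσ, ← Finset.sum_div]
    rw [abs_sub_comm, div_sub' hV.ne', abs_div, abs_of_pos hV, mul_comm V]
  have hKσ (x : Ω) (i : ι) : |G x / σ - G (s x i) / σ| ≤ K / σ := by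
    rw [← sub_div, abs_div, abs_of_pos hσ]
    exact div_le_div_of_nonneg_right (hK x i) hσ.le
  have hΓvar : 𝔼 x, |carreDuChamp s G Y x - 2 * V| ≤ √(uniformVar (carreDuChamp s G Y)) := by
    rw [hVdef, ← hs.expect_carreDuChamp_eq_two_mul_uniformVar hG]
    exact expect_abs_le_sqrt _
  have hLvar : 𝔼 x, |moveLaplacian s Y x| ≤ √(uniformVar (moveLaplacian s Y)) := by
    simpa [uniformVar, hs.expect_moveLaplacian] using expect_abs_le_sqrt (moveLaplacian s Y)
  calc _ ≤ 𝔼 x, |carreDuChamp s G Y x - 2 * V| / V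
          + 2 * (K / σ) * 𝔼 x, |moveLaplacian s Y x| / σ := by
        simpa only [hΓ, hLW] using
          hs.abs_expect_sub_stdGaussCDF_le (div_nonneg hK0 hσ.le) hLG hKσ z
    _ = (𝔼 x, |carreDuChamp s G Y x - 2 * V| + 2 * K * 𝔼 x, |moveLaplacian s Y x|) / V := by
        rw [← Finset.expect_div, ← Finset.expect_div, ← hσσ]
        field_simp
    _ ≤ _ := by gcongr

end ReversibleMoves

/-! ### The Efron–Stein inequality -/

lemma uniformVar_eq_half {Ω : Type*} [Fintype Ω] [Nonempty Ω] (f : Ω → ℝ) :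
    uniformVar f = (𝔼 x, 𝔼 y, (f x - f y) ^ 2) / 2 := by
  simp only [uniformVar, sub_sq, Finset.expect_add_distrib, Finset.expect_sub_distrib,
    Fintype.expect_const, ← Finset.expect_mul, ← Finset.mul_expect]
  ring

lemma expect_sub_sq_le_add {A B : Type*} [Fintype A] [Nonempty A] [Fintype B] [Nonempty B]
    (f : A → B → ℝ) :
    𝔼 a, 𝔼 a', 𝔼 b, 𝔼 b', (f a b - f a' b') ^ 2
      ≤ 𝔼 a, 𝔼 a', 𝔼 b, (f a b - f a' b) ^ 2 + 𝔼 a, 𝔼 b, 𝔼 b', (f a b - f a b') ^ 2 := by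
  have hmixed : 0 ≤ 𝔼 a, 𝔼 a', 𝔼 b, 𝔼 b', (f a b - f a' b - f a b' + f a' b') ^ 2 :=
    Finset.expect_nonneg fun _ _ => Finset.expect_nonneg fun _ _ =>
      Finset.expect_nonneg fun _ _ => Finset.expect_nonneg fun _ _ => sq_nonneg _
  have hexpand (a a' b b') : (f a b - f a' b - f a b' + f a' b') ^ 2
      = (f a b - f a' b) ^ 2 + (f a b' - f a' b') ^ 2 + (f a b - f a b') ^ 2
        + (f a' b - f a' b') ^ 2 - (f a b - f a' b') ^ 2 - (f a' b - f a b') ^ 2 := by ring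
  simp only [hexpand, Finset.expect_add_distrib, Finset.expect_sub_distrib,
    Fintype.expect_const] at hmixed
  have hswap : 𝔼 a, 𝔼 a', 𝔼 b, 𝔼 b', (f a' b - f a b') ^ 2
      = 𝔼 a, 𝔼 a', 𝔼 b, 𝔼 b', (f a b - f a' b') ^ 2 := Finset.expect_comm _ _ _
  rw [hswap] at hmixed
  linarith

lemma expect_fin_succ_pi {α M : Type*} [Fintype α] [AddCommMonoid M] [Module ℚ≥0 M] {n : ℕ}
    (f : (Fin (n + 1) → α) → M) : 𝔼 ω, f ω = 𝔼 a, 𝔼 ω : Fin n → α, f (Fin.cons a ω) := by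
  rw [← Fintype.expect_equiv (Fin.consEquiv fun _ => α) (fun p => f (Fin.cons p.1 p.2)) f
    fun _ => rfl, ← Finset.univ_product_univ, Finset.expect_product]

lemma expect_sub_sq_le_sum_update {α : Type*} [Fintype α] [Nonempty α] {n : ℕ}
    (f : (Fin n → α) → ℝ) :
    𝔼 ω, 𝔼 ω', (f ω - f ω') ^ 2
      ≤ ∑ b, 𝔼 ω, 𝔼 j, (f ω - f (Function.update ω b j)) ^ 2 := by
  induction n with
  | zero => simp [Subsingleton.elim _ (default : Fin 0 → α)]
  | succ n ih =>
    set F : α → (Fin n → α) → ℝ := fun a ω => f (Fin.cons a ω) with hF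
    have htensor := expect_sub_sq_le_add F
    have htail : 𝔼 a, 𝔼 ω, 𝔼 ω', (F a ω - F a ω') ^ 2
        ≤ ∑ b, 𝔼 a, 𝔼 ω, 𝔼 j, (F a ω - F a (Function.update ω b j)) ^ 2 := by
      rw [← Finset.expect_sum_comm]
      exact Finset.expect_le_expect fun a _ => ih (F a)
    have hleft : 𝔼 a, 𝔼 ω, 𝔼 a', 𝔼 ω', (F a ω - F a' ω') ^ 2
        = 𝔼 a, 𝔼 a', 𝔼 ω, 𝔼 ω', (F a ω - F a' ω') ^ 2 :=
      Finset.expect_congr rfl fun a _ => Finset.expect_comm _ _ _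
    have hhead : 𝔼 a, 𝔼 ω, 𝔼 a', (F a ω - F a' ω) ^ 2
        = 𝔼 a, 𝔼 a', 𝔼 ω, (F a ω - F a' ω) ^ 2 :=
      Finset.expect_congr rfl fun a _ => Finset.expect_comm _ _ _
    simp only [expect_fin_succ_pi, Fin.sum_univ_succ, Fin.update_cons_zero, ← Fin.cons_update]
    simp only [hF] at hleft hhead htensor htail
    linarith

theorem uniformVar_le_sum_update {α : Type*} [Fintype α] [Nonempty α] {n : ℕ}
    (f : (Fin n → α) → ℝ) :
    uniformVar f ≤ (𝔼 ω, ∑ b, 𝔼 j, (f ω - f (Function.update ω b j)) ^ 2) / 2 := by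
  rw [uniformVar_eq_half, Finset.expect_sum_comm]
  linarith [expect_sub_sq_le_sum_update f]

/-! ### Ball moves and sums over urns -/

section BallMoves

variable {n m : ℕ}

/-- Move ball `p.1` to urn `p.2`. -/
def ballMove (ω : Fin n → Fin m) (p : Fin n × Fin m) : Fin n → Fin m :=
  Function.update ω p.1 p.2

lemma ballMove_of_eq {ω : Fin n → Fin m} {p : Fin n × Fin m} (h : ω p.1 = p.2) :
    ballMove ω p = ω := by
  rw [ballMove, ← h, Function.update_eq_self]

lemma reversibleMoves_ballMove : ReversibleMoves (ballMove (n := n) (m := m)) := by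
  intro H
  simp only [Fintype.sum_prod_type, ballMove]
  rw [Finset.sum_comm]
  conv_rhs => rw [Finset.sum_comm]
  refine Finset.sum_congr rfl fun b _ => ?_
  rw [← Fintype.sum_prod_type' fun ω j => H ω (Function.update ω b j),
    ← Fintype.sum_prod_type' fun ω j => H (Function.update ω b j) ω]
  refine Finset.sum_nbij' (fun p => (Function.update p.1 b p.2, p.1 b))
    (fun p => (Function.update p.1 b p.2, p.1 b)) (by simp) (by simp) ?_ ?_ ?_ <;>
    simp

lemma ballCount_eq_sum (ω : Fin n → Fin m) (i : Fin m) :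
    ballCount ω i = ∑ b, if ω b = i then 1 else 0 := by
  rw [ballCount, Finset.card_filter]

lemma ballCount_le (ω : Fin n → Fin m) (i : Fin m) : ballCount ω i ≤ n := by
  simpa [ballCount] using Finset.card_filter_le Finset.univ fun b => ω b = i

lemma sum_ballCount_mul (ω : Fin n → Fin m) (F : Fin m → ℝ) :
    ∑ i, ballCount ω i * F i = ∑ b, F (ω b) := by
  simp only [ballCount_eq_sum, Nat.cast_sum, Finset.sum_mul]
  rw [Finset.sum_comm]
  simp

lemma sum_ballCount (ω : Fin n → Fin m) : ∑ i, (ballCount ω i : ℝ) = n := by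
  simpa using sum_ballCount_mul ω 1

lemma ballCount_update_add (ω : Fin n → Fin m) (b : Fin n) (j i : Fin m) :
    ballCount (Function.update ω b j) i + (if ω b = i then 1 else 0)
      = ballCount ω i + if j = i then 1 else 0 := by
  have hrest : ∑ c ∈ Finset.univ.erase b, (if Function.update ω b j c = i then 1 else 0)
      = ∑ c ∈ Finset.univ.erase b, if ω c = i then 1 else 0 :=
    Finset.sum_congr rfl fun c hc => by
      rw [Function.update_of_ne (Finset.ne_of_mem_erase hc)]
  rw [ballCount_eq_sum, ballCount_eq_sum, ← Finset.add_sum_erase _ _ (Finset.mem_univ b),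
    ← Finset.add_sum_erase (a := b) _ (fun c => if ω c = i then 1 else 0) (Finset.mem_univ b),
    hrest, Function.update_self]
  ring

lemma ballCount_update_of_ne {ω : Fin n → Fin m} {b : Fin n} {j i : Fin m} (hb : ω b ≠ i)
    (hj : j ≠ i) : ballCount (Function.update ω b j) i = ballCount ω i := by
  simpa [hb, hj] using ballCount_update_add ω b j i

lemma ballCount_update_target {ω : Fin n → Fin m} {b : Fin n} {j : Fin m} (h : ω b ≠ j) :
    ballCount (Function.update ω b j) j = ballCount ω j + 1 := by
  simpa [h] using ballCount_update_add ω b j j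

lemma ballCount_update_source {ω : Fin n → Fin m} {b : Fin n} {j : Fin m} (h : ω b ≠ j) :
    ballCount (Function.update ω b j) (ω b) + 1 = ballCount ω (ω b) := by
  simpa [h.symm] using ballCount_update_add ω b j (ω b)

/-- The sum of `φ` over the occupation numbers of all urns. -/
noncomputable def urnSum (φ : ℕ → ℝ) (ω : Fin n → Fin m) : ℝ := ∑ i, φ (ballCount ω i)

lemma urnSum_sub_ballMove (φ : ℕ → ℝ) {ω : Fin n → Fin m} {p : Fin n × Fin m} (h : ω p.1 ≠ p.2) :
    urnSum φ ω - urnSum φ (ballMove ω p)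
      = Δ_[1] φ (ballCount ω (ω p.1) - 1) - Δ_[1] φ (ballCount ω p.2) := by
  simp only [urnSum, ballMove, fwdDiff]
  rw [← Finset.sum_sub_distrib, ← Finset.add_sum_erase _ _ (Finset.mem_univ (ω p.1)),
    ← Finset.add_sum_erase _ _ (Finset.mem_erase.2 ⟨h.symm, Finset.mem_univ p.2⟩),
    Finset.sum_eq_zero, ballCount_update_target h, ← ballCount_update_source h]
  · simp only [Nat.add_sub_cancel]
    ring
  · intro i hi
    simp only [Finset.mem_erase] at hi
    rw [ballCount_update_of_ne hi.2.1.symm hi.1.symm, sub_self]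

lemma abs_urnSum_sub_ballMove_le {φ : ℕ → ℝ} {c : ℝ} (hc : ∀ k, |Δ_[1] φ k| ≤ c)
    (ω : Fin n → Fin m) (p : Fin n × Fin m) : |urnSum φ ω - urnSum φ (ballMove ω p)| ≤ 2 * c := by
  have hc0 : 0 ≤ c := (abs_nonneg _).trans (hc 0)
  by_cases h : ω p.1 = p.2
  · rw [ballMove_of_eq h, sub_self, abs_zero]
    positivity
  · rw [urnSum_sub_ballMove φ h, two_mul]
    exact (abs_sub _ _).trans (add_le_add (hc _) (hc _))

lemma sum_ballMove_eq {ω : Fin n → Fin m} {f : Fin n × Fin m → ℝ} {F : ℕ → ℕ → ℝ}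
    (hstay : ∀ p, ω p.1 = p.2 → f p = 0)
    (hmove : ∀ p, ω p.1 ≠ p.2 → f p = F (ballCount ω (ω p.1)) (ballCount ω p.2)) :
    ∑ p, f p = (∑ i, ∑ j, ballCount ω i * F (ballCount ω i) (ballCount ω j))
      - ∑ i, ballCount ω i * F (ballCount ω i) (ballCount ω i) := by
  have hf (b : Fin n) (j : Fin m) : f (b, j) = F (ballCount ω (ω b)) (ballCount ω j)
      - if ω b = j then F (ballCount ω j) (ballCount ω j) else 0 := by
    split_ifs with h
    · rw [hstay (b, j) h, h, sub_self]
    · rw [hmove (b, j) h, sub_zero]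
  rw [Fintype.sum_prod_type]
  simp only [hf, Finset.sum_sub_distrib, Finset.sum_ite_eq, Finset.mem_univ, if_true,
    ← Finset.mul_sum]
  rw [sum_ballCount_mul ω fun i => ∑ j, F (ballCount ω i) (ballCount ω j),
    sum_ballCount_mul ω fun i => F (ballCount ω i) (ballCount ω i)]

lemma moveLaplacian_urnSum (φ : ℕ → ℝ) (ω : Fin n → Fin m) :
    moveLaplacian ballMove (urnSum φ) ω
      = urnSum (fun k => (m - 1) * k * Δ_[1] φ (k - 1) - (n - k) * Δ_[1] φ k) ω := by
  rw [moveLaplacian, sum_ballMove_eq (F := fun a c => Δ_[1] φ (a - 1) - Δ_[1] φ c)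
    (fun p h => by rw [ballMove_of_eq h, sub_self]) fun p h => urnSum_sub_ballMove φ h]
  simp only [mul_sub, Finset.sum_sub_distrib, ← Finset.mul_sum, ← Finset.sum_mul, sum_ballCount,
    Finset.sum_const, Finset.card_univ, Fintype.card_fin, nsmul_eq_mul, urnSum, sub_mul, mul_assoc,
    one_mul, mul_left_comm _ (m : ℝ)]
  ring

lemma carreDuChamp_urnSum (φ χ : ℕ → ℝ) :
    carreDuChamp (ballMove (n := n) (m := m)) (urnSum φ) (urnSum χ)
      = urnSum (fun k => m * (k * Δ_[1] φ (k - 1) * Δ_[1] χ (k - 1))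
          + n * (Δ_[1] φ k * Δ_[1] χ k)
          - k * ((Δ_[1] φ (k - 1) - Δ_[1] φ k) * (Δ_[1] χ (k - 1) - Δ_[1] χ k)))
        - urnSum (Δ_[1] φ) * urnSum (fun k => k * Δ_[1] χ (k - 1))
        - urnSum (fun k => k * Δ_[1] φ (k - 1)) * urnSum (Δ_[1] χ) := by
  funext ω
  rw [carreDuChamp, sum_ballMove_eq
    (F := fun a c => (Δ_[1] φ (a - 1) - Δ_[1] φ c) * (Δ_[1] χ (a - 1) - Δ_[1] χ c))
    (fun p h => by rw [ballMove_of_eq h, sub_self, zero_mul])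
    fun p h => by rw [urnSum_sub_ballMove φ h, urnSum_sub_ballMove χ h]]
  have hexpand (a c : ℕ) :
      (a : ℝ) * ((Δ_[1] φ (a - 1) - Δ_[1] φ c) * (Δ_[1] χ (a - 1) - Δ_[1] χ c))
        = a * Δ_[1] φ (a - 1) * Δ_[1] χ (a - 1) + a * (Δ_[1] φ c * Δ_[1] χ c)
          - Δ_[1] φ c * (a * Δ_[1] χ (a - 1)) - a * Δ_[1] φ (a - 1) * Δ_[1] χ c := by ring
  simp only [hexpand, Finset.sum_sub_distrib, Finset.sum_add_distrib, ← Finset.mul_sum,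
    ← Finset.sum_mul, sum_ballCount, Finset.sum_const, Finset.card_univ, Fintype.card_fin,
    nsmul_eq_mul, urnSum, mul_left_comm _ (m : ℝ), Pi.sub_apply, Pi.mul_apply]
  ring

/-- The probability that a given urn contains exactly `k` balls, written as the expected proportion
of such urns. -/
noncomputable def urnProb (n m k : ℕ) : ℝ :=
  (𝔼 ω : Fin n → Fin m, urnSum (Pi.single k 1) ω) / m

lemma urnProb_nonneg (k : ℕ) : 0 ≤ urnProb n m k := by
  have hsingle : (0 : ℕ → ℝ) ≤ Pi.single k 1 := Pi.single_nonneg.2 zero_le_one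
  exact div_nonneg (Finset.expect_nonneg fun _ _ => Finset.sum_nonneg fun _ _ => hsingle _)
    m.cast_nonneg

lemma urnProb_of_lt {k : ℕ} (hk : n < k) : urnProb n m k = 0 := by
  have hω (ω : Fin n → Fin m) : urnSum (Pi.single k 1) ω = 0 :=
    Finset.sum_eq_zero fun i _ => Pi.single_eq_of_ne ((ballCount_le ω i).trans_lt hk).ne _
  simp [urnProb, hω]

lemma expect_urnSum (hm : 0 < m) (φ : ℕ → ℝ) :
    𝔼 ω : Fin n → Fin m, urnSum φ ω = m * ∑ k ∈ Finset.range (n + 1), urnProb n m k * φ k := by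
  have hω (ω : Fin n → Fin m) : urnSum φ ω
      = ∑ k ∈ Finset.range (n + 1), urnSum (Pi.single k 1) ω * φ k := by
    simp only [urnSum, Finset.sum_mul]
    rw [Finset.sum_comm]
    refine Finset.sum_congr rfl fun i _ => ?_
    simp [Pi.single_apply, Nat.lt_succ_iff.2 (ballCount_le ω i)]
  simp only [hω, Finset.expect_sum_comm, ← Finset.expect_mul, urnProb, Finset.mul_sum]
  exact Finset.sum_congr rfl fun k _ => by field_simp

lemma sum_urnProb (hm : 0 < m) : ∑ k ∈ Finset.range (n + 1), urnProb n m k = 1 := by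
  have : Nonempty (Fin m) := ⟨⟨0, hm⟩⟩
  simpa [urnSum, hm.ne'] using (expect_urnSum (n := n) hm fun _ => 1).symm

lemma fwdDiff_indicator_lt (k : ℕ) :
    Δ_[1] (fun l => if k < l then (1 : ℝ) else 0) = Pi.single k 1 := by
  funext l
  rw [fwdDiff, Pi.single_apply]
  split_ifs <;> first | omega | norm_num

lemma urnProb_detailed_balance (hm : 0 < m) (k : ℕ) :
    (m - 1) * (k + 1) * urnProb n m (k + 1) = (n - k) * urnProb n m k := by
  have hmean := reversibleMoves_ballMove.expect_moveLaplacian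
    (urnSum (n := n) (m := m) fun l => if k < l then 1 else 0)
  have hω (ω : Fin n → Fin m) :
      moveLaplacian ballMove (urnSum fun l => if k < l then (1 : ℝ) else 0) ω
        = (m - 1) * (k + 1) * urnSum (Pi.single (k + 1) 1) ω
          - (n - k) * urnSum (Pi.single k 1) ω := by
    rw [moveLaplacian_urnSum, fwdDiff_indicator_lt]
    simp only [urnSum, Finset.mul_sum, ← Finset.sum_sub_distrib]
    refine Finset.sum_congr rfl fun i _ => congrArg₂ _ ?_ ?_ <;> generalize ballCount ω i = l
    · rcases l with _ | l
      · simp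
      · by_cases hl : l = k <;> simp [hl]
    · by_cases hl : l = k <;> simp [hl]
  simp only [hω, Finset.expect_sub_distrib, ← Finset.mul_expect] at hmean
  simp only [urnProb]
  field_simp
  linarith

end BallMoves

/-! ### The Stein equation of the number of balls in an urn -/

section UrnStein

variable {n m : ℕ}

lemma urnProb_succ (hm : 2 ≤ m) (k : ℕ) :
    urnProb n m (k + 1) = (n - k) / ((m - 1) * (k + 1)) * urnProb n m k := by
  have hm' : (2 : ℝ) ≤ m := by exact_mod_cast hm
  have hpos : (0 : ℝ) < (m - 1) * (k + 1) := mul_pos (by linarith) (by positivity)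
  rw [div_mul_eq_mul_div, eq_div_iff hpos.ne', ← urnProb_detailed_balance (by omega)]
  ring

lemma urnProb_pos (hm : 2 ≤ m) {k : ℕ} (hk : k ≤ n) : 0 < urnProb n m k := by
  have hm' : (2 : ℝ) ≤ m := by exact_mod_cast hm
  induction k with
  | zero =>
    refine (urnProb_nonneg 0).lt_of_ne fun h => ?_
    have hzero (k : ℕ) : urnProb n m k = 0 := by
      induction k with
      | zero => exact h.symm
      | succ k ih => rw [urnProb_succ hm, ih, mul_zero]
    simpa [hzero] using sum_urnProb (n := n) (m := m) (by omega)
  | succ k ih =>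
    have hk' : (k : ℝ) + 1 ≤ n := by exact_mod_cast hk
    rw [urnProb_succ hm]
    exact mul_pos (div_pos (by linarith) (mul_pos (by linarith) (by positivity))) (ih (by omega))

lemma sum_urnProb_le_one (hm : 0 < m) (s : Finset ℕ) : ∑ k ∈ s, urnProb n m k ≤ 1 := by
  calc ∑ k ∈ s, urnProb n m k
      ≤ ∑ k ∈ s ∪ Finset.range (n + 1), urnProb n m k :=
        Finset.sum_le_sum_of_subset_of_nonneg Finset.subset_union_left
          fun k _ _ => urnProb_nonneg k
    _ = ∑ k ∈ Finset.range (n + 1), urnProb n m k :=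
        (Finset.sum_subset Finset.subset_union_right fun k _ hk =>
          urnProb_of_lt (by simpa using hk)).symm
    _ = 1 := sum_urnProb hm

lemma urnProb_succ_mul_le (hm : 2 ≤ m) {l r : ℕ} (hlr : l ≤ r) :
    urnProb n m l * urnProb n m (r + 1) ≤ urnProb n m (l + 1) * urnProb n m r := by
  have hm' : (2 : ℝ) ≤ m := by exact_mod_cast hm
  rcases lt_or_ge n r with hn | hn
  · rw [urnProb_of_lt hn, urnProb_of_lt (hn.trans r.lt_succ_self), mul_zero, mul_zero]
  have hratio : ((n : ℝ) - r) / ((m - 1) * (r + 1)) ≤ (n - l) / ((m - 1) * (l + 1)) := by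
    have hn' : (r : ℝ) ≤ n := by exact_mod_cast hn
    have hlr' : (l : ℝ) ≤ r := by exact_mod_cast hlr
    have : (0 : ℝ) < m - 1 := by linarith
    gcongr
    linarith
  rw [urnProb_succ hm, urnProb_succ hm, mul_left_comm, mul_assoc]
  exact mul_le_mul_of_nonneg_right hratio (mul_nonneg (urnProb_nonneg l) (urnProb_nonneg r))

lemma urnProb_mul_le (hm : 2 ≤ m) {l r : ℕ} (hlr : l ≤ r) (s : ℕ) :
    urnProb n m l * urnProb n m (r + s) ≤ urnProb n m (l + s) * urnProb n m r := by
  induction s generalizing l r with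
  | zero => rfl
  | succ s ih =>
    rcases hlr.eq_or_lt with rfl | hlt
    · exact (mul_comm _ _).le
    calc urnProb n m l * urnProb n m (r + (s + 1))
        ≤ urnProb n m (l + 1) * urnProb n m (r + s) := by
          rw [← add_assoc]
          exact urnProb_succ_mul_le hm (by omega)
      _ ≤ urnProb n m (l + 1 + s) * urnProb n m r := ih hlt
      _ = urnProb n m (l + (s + 1)) * urnProb n m r := by rw [add_assoc, add_comm 1]

lemma sum_urnProb_mul_le (hm : 0 < m) (s : Finset ℕ) (e : ℕ ↪ ℕ) (k : ℕ) :
    ∑ l ∈ s, urnProb n m (e l) * urnProb n m k ≤ urnProb n m k := by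
  rw [← Finset.sum_mul, ← Finset.sum_map s e]
  exact mul_le_of_le_one_left (urnProb_nonneg k) (sum_urnProb_le_one hm _)

/-- Cumulative sums of the centred indicator of the level `d` under the law of an urn's occupation
number; up to a factor they solve the Stein equation `urnStein_eq`. -/
noncomputable def urnCumul (n m d k : ℕ) : ℝ :=
  ∑ l ∈ Finset.range (k + 1), ((Pi.single d 1 : ℕ → ℝ) l - urnProb n m d) * urnProb n m l

lemma urnCumul_succ (d k : ℕ) : urnCumul n m d (k + 1)
    = urnCumul n m d k + ((Pi.single d 1 : ℕ → ℝ) (k + 1) - urnProb n m d) * urnProb n m (k + 1) :=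
  Finset.sum_range_succ _ _

lemma urnCumul_of_lt {d k : ℕ} (hk : k < d) :
    urnCumul n m d k = -∑ l ∈ Finset.range (k + 1), urnProb n m l * urnProb n m d := by
  rw [urnCumul, ← Finset.sum_neg_distrib]
  refine Finset.sum_congr rfl fun l hl => ?_
  rw [Pi.single_eq_of_ne (by have := Finset.mem_range.1 hl; omega)]
  ring

lemma urnCumul_of_ge {d k : ℕ} (hm : 0 < m) (hk : d ≤ k) (hkn : k ≤ n) :
    urnCumul n m d k = ∑ t ∈ Finset.range (n - k), urnProb n m d * urnProb n m (k + 1 + t) := by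
  have hsum := sum_urnProb (n := n) hm
  rw [show n + 1 = k + 1 + (n - k) by omega, Finset.sum_range_add] at hsum
  simp only [urnCumul, Pi.single_apply, sub_mul, Finset.sum_sub_distrib, ← Finset.mul_sum, ite_mul,
    one_mul, zero_mul]
  rw [Finset.sum_ite_eq', if_pos (Finset.mem_range.2 (by omega))]
  linear_combination (-urnProb n m d) * hsum

lemma abs_urnCumul_le (hm : 2 ≤ m) {d k : ℕ} (hkn : k ≤ n) :
    |urnCumul n m d k| ≤ urnProb n m (k + 1) := by
  have hm0 : 0 < m := by omega
  rcases lt_or_ge k d with hk | hk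
  · rw [urnCumul_of_lt hk, abs_neg, abs_of_nonneg (Finset.sum_nonneg fun l _ =>
      mul_nonneg (urnProb_nonneg _) (urnProb_nonneg _))]
    refine (Finset.sum_le_sum fun l hl => ?_).trans
      (sum_urnProb_mul_le hm0 _ (addRightEmbedding (d - (k + 1))) (k + 1))
    simpa [Nat.add_sub_cancel' (show k + 1 ≤ d from hk)] using
      urnProb_mul_le (n := n) hm (Finset.mem_range.1 hl).le (d - (k + 1))
  · rw [urnCumul_of_ge hm0 hk hkn, abs_of_nonneg (Finset.sum_nonneg fun l _ =>
      mul_nonneg (urnProb_nonneg _) (urnProb_nonneg _))]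
    exact (Finset.sum_le_sum fun t _ => urnProb_mul_le hm (by omega) t).trans
      (sum_urnProb_mul_le hm0 _ (addLeftEmbedding d) (k + 1))

/-- Increments of the solution of the Stein equation for the law of an urn's occupation number, with
right-hand side `m` times the centred indicator of the level `d`. -/
noncomputable def urnStein (n m d k : ℕ) : ℝ :=
  if k < n then -(m * urnCumul n m d k / ((n - k) * urnProb n m k)) else 0

lemma succ_mul_abs_urnStein_le (hm : 2 ≤ m) (d k : ℕ) : (k + 1) * |urnStein n m d k| ≤ 2 := by
  rw [urnStein]
  split_ifs with hk
  · have hm' : (2 : ℝ) ≤ m := by exact_mod_cast hm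
    have hk' : (k : ℝ) < n := by exact_mod_cast hk
    have hflow : 0 < ((n : ℝ) - k) * urnProb n m k :=
      mul_pos (by linarith) (urnProb_pos (n := n) hm hk.le)
    rw [abs_neg, abs_div, abs_mul, abs_of_pos hflow, Nat.abs_cast, mul_div_assoc',
      div_le_iff₀ hflow, ← urnProb_detailed_balance (by omega)]
    have := urnProb_nonneg (n := n) (m := m) (k + 1)
    calc ((k : ℝ) + 1) * (m * |urnCumul n m d k|)
        ≤ (k + 1) * ((2 * (m - 1)) * urnProb n m (k + 1)) := by
          have habs := abs_urnCumul_le (d := d) hm hk.le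
          gcongr <;> linarith
      _ = _ := by ring
  · simp

lemma sub_mul_urnStein (hm : 2 ≤ m) {d k : ℕ} (hdn : d ≤ n) (hk : k ≤ n) :
    (n - k) * urnStein n m d k = -(m * urnCumul n m d k / urnProb n m k) := by
  rw [urnStein]
  rcases hk.lt_or_eq with hkn | rfl
  · have hk' : (0 : ℝ) < n - k := sub_pos.2 (by exact_mod_cast hkn)
    have hq := urnProb_pos hm hk
    rw [if_pos hkn]
    field_simp
  · simp [urnCumul_of_ge (m := m) (by omega) hdn le_rfl]

lemma pred_mul_succ_mul_urnStein (hm : 2 ≤ m) {d k : ℕ} (hk : k < n) :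
    (m - 1) * (k + 1) * urnStein n m d k = -(m * urnCumul n m d k / urnProb n m (k + 1)) := by
  have hk' : (0 : ℝ) < n - k := sub_pos.2 (by exact_mod_cast hk)
  have hq := urnProb_pos hm hk.le
  have hq' := urnProb_pos hm hk
  have hbalance := urnProb_detailed_balance (n := n) (m := m) (by omega) k
  rw [urnStein, if_pos hk]
  field_simp
  linear_combination (-urnCumul n m d k) * hbalance

lemma urnStein_eq (hm : 2 ≤ m) {d k : ℕ} (hdn : d ≤ n) (hk : k ≤ n) :
    (m - 1) * k * urnStein n m d (k - 1) - (n - k) * urnStein n m d k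
      = m * ((Pi.single d 1 : ℕ → ℝ) k - urnProb n m d) := by
  have hq := urnProb_pos hm hk
  rw [sub_mul_urnStein hm hdn hk]
  rcases k with _ | k
  · simp only [urnCumul, zero_add, Finset.sum_range_one, Nat.cast_zero]
    field_simp
    ring
  · rw [Nat.add_sub_cancel, Nat.cast_add_one, pred_mul_succ_mul_urnStein hm hk, urnCumul_succ]
    field_simp
    ring

theorem exists_moveLaplacian_urnSum_eq (hm : 2 ≤ m) {d : ℕ} (hdn : d ≤ n) :
    ∃ g : ℕ → ℝ, (∀ k : ℕ, m * ((k + 1) * |Δ_[1] g k|) ≤ 2) ∧ ∀ ω : Fin n → Fin m,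
      moveLaplacian ballMove (urnSum g) ω
        = urnSum (Pi.single d 1) ω - 𝔼 ω : Fin n → Fin m, urnSum (Pi.single d 1) ω := by
  have hm0 : (0 : ℝ) < m := by positivity
  set g : ℕ → ℝ := fun k => (∑ l ∈ Finset.range k, urnStein n m d l) / m
  have hg (k : ℕ) : Δ_[1] g k = urnStein n m d k / m := by
    simp only [g, fwdDiff, Finset.sum_range_succ, ← sub_div, add_sub_cancel_left]
  refine ⟨g, fun k => ?_, fun ω => ?_⟩
  · rw [hg, abs_div, Nat.abs_cast, ← mul_div_assoc, mul_div_cancel₀ _ hm0.ne']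
    exact succ_mul_abs_urnStein_le hm d k
  · have hstein (i : Fin m) : (m - 1) * ballCount ω i * Δ_[1] g (ballCount ω i - 1)
          - (n - ballCount ω i) * Δ_[1] g (ballCount ω i)
        = (Pi.single d 1 : ℕ → ℝ) (ballCount ω i) - urnProb n m d := by
      rw [hg, hg, ← mul_div_assoc, ← mul_div_assoc, ← sub_div,
        urnStein_eq hm hdn (ballCount_le ω i), mul_div_cancel_left₀ _ hm0.ne']
    rw [moveLaplacian_urnSum, urnSum, Finset.sum_congr rfl fun i _ => hstein i,
      Finset.sum_sub_distrib, urnProb]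
    simp [urnSum, mul_div_cancel₀ _ hm0.ne']

end UrnStein

/-! ### The variance is at least of the order of the mean -/

lemma sum_expect_sq_le_uniformVar {Ω J : Type*} [Fintype Ω] [Nonempty Ω] [Fintype J]
    {Y : Ω → ℝ} {Z : J → Ω → ℝ} (hmean : ∀ j, 𝔼 x, Z j x = 0)
    (hproj : ∀ j, 𝔼 x, (Y x - Z j x) * Z j x = 0)
    (horth : ∀ i j, i ≠ j → 𝔼 x, Z i x * Z j x = 0) :
    ∑ j, 𝔼 x, Z j x ^ 2 ≤ uniformVar Y := by
  set μ := 𝔼 y, Y y with hμ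
  have hcross : 𝔼 x, (Y x - μ) * ∑ j, Z j x = ∑ j, 𝔼 x, Z j x ^ 2 := by
    simp only [Finset.mul_sum, Finset.expect_sum_comm]
    refine Finset.sum_congr rfl fun j _ => ?_
    rw [← add_zero (𝔼 x, Z j x ^ 2), ← hproj j, ← sub_zero (_ + _), ← mul_zero μ, ← hmean j,
      Finset.mul_expect, ← Finset.expect_add_distrib, ← Finset.expect_sub_distrib]
    exact Finset.expect_congr rfl fun x _ => by ring
  have hsquare : 𝔼 x, (∑ j, Z j x) ^ 2 = ∑ j, 𝔼 x, Z j x ^ 2 := by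
    simp only [sq, Finset.sum_mul_sum, Finset.expect_sum_comm]
    exact Finset.sum_congr rfl fun j _ => Fintype.sum_eq_single j fun i hij => horth j i hij.symm
  have hresidual : 0 ≤ 𝔼 x, (Y x - μ - ∑ j, Z j x) ^ 2 :=
    Finset.expect_nonneg fun x _ => sq_nonneg _
  simp only [sub_sq (Y _ - μ), Finset.expect_add_distrib, Finset.expect_sub_distrib, mul_assoc,
    ← Finset.mul_expect, hcross, hsquare] at hresidual
  rw [uniformVar, ← hμ]
  linarith

lemma succ_mul_cast_choose_succ (s k : ℕ) :
    (k + 1 : ℝ) * s.choose (k + 1) = (s - k) * s.choose k := by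
  rcases le_or_gt k s with hk | hk
  · rw [← Nat.cast_sub hk, mul_comm, mul_comm (_ : ℝ) (s.choose k : ℝ)]
    exact_mod_cast Nat.choose_succ_right_eq s k
  · simp [Nat.choose_eq_zero_of_lt hk, Nat.choose_eq_zero_of_lt (Nat.lt_succ_of_lt hk)]

lemma sum_range_choose_of_le {s N : ℕ} (hs : s ≤ N) :
    ∑ k ∈ Finset.range (N + 1), s.choose k = 2 ^ s := by
  rw [← Nat.sum_range_choose]
  refine (Finset.sum_subset (Finset.range_mono (by omega)) fun k _ hk => ?_).symm
  exact Nat.choose_eq_zero_of_lt (by simpa using hk)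

/-- The probability of `d` successes in `s` fair trials. -/
noncomputable def fairBinom (d s : ℕ) : ℝ := s.choose d / 2 ^ s

lemma eight_mul_choose_le (s d : ℕ) : 8 * (s + 3).choose d ≤ 3 * 2 ^ (s + 3) := by
  induction s generalizing d with
  | zero =>
    rcases lt_or_ge 3 d with hd | hd
    · simp [Nat.choose_eq_zero_of_lt hd]
    · interval_cases d <;> decide
  | succ s ih =>
    rcases d with _ | d
    · have : 1 ≤ 2 ^ s := Nat.one_le_two_pow
      simp only [Nat.choose_zero_right, pow_add]
      omega
    · have hleft := ih d
      have hright := ih (d + 1)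
      rw [show s + 1 + 3 = s + 3 + 1 by ring, Nat.choose_succ_succ', pow_succ]
      omega

lemma fairBinom_le {d : ℕ} (hd : 2 ≤ d) (s : ℕ) : fairBinom d s ≤ 3 / 8 := by
  have hchoose : 8 * s.choose d ≤ 3 * 2 ^ s := by
    rcases le_or_gt 3 s with hs | hs
    · simpa [Nat.sub_add_cancel hs] using eight_mul_choose_le (s - 3) d
    · rcases lt_or_ge s d with hsd | hsd
      · simp [Nat.choose_eq_zero_of_lt hsd]
      · obtain ⟨rfl, rfl⟩ : s = 2 ∧ d = 2 := by omega
        decide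
  have hcast : (8 : ℝ) * s.choose d ≤ 3 * 2 ^ s := by exact_mod_cast hchoose
  rw [fairBinom, div_le_div_iff₀ (by positivity) (by norm_num)]
  linarith

section BallSwap

variable {n m : ℕ}

/-- Exchange the urns `a` and `b` for the single ball `c`. -/
def ballSwap (a b : Fin m) (c : Fin n) (ω : Fin n → Fin m) : Fin n → Fin m :=
  Function.update ω c (Equiv.swap a b (ω c))

lemma ballSwap_apply_self (a b : Fin m) (c : Fin n) (ω : Fin n → Fin m) :
    ballSwap a b c ω c = Equiv.swap a b (ω c) := Function.update_self ..

lemma ballSwap_involutive (a b : Fin m) (c : Fin n) : Function.Involutive (ballSwap a b c) := by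
  intro ω
  rw [ballSwap, ballSwap_apply_self, Equiv.swap_apply_self, ballSwap, Function.update_idem,
    Function.update_eq_self]

lemma ballCount_ballSwap_of_ne {a b i : Fin m} (ha : i ≠ a) (hb : i ≠ b) (c : Fin n)
    (ω : Fin n → Fin m) : ballCount (ballSwap a b c ω) i = ballCount ω i := by
  have h := ballCount_update_add ω c (Equiv.swap a b (ω c)) i
  simp only [Equiv.swap_apply_eq_iff, Equiv.swap_apply_of_ne_of_ne ha hb] at h
  simpa [ballSwap] using h

lemma ballCount_ballSwap_add (a b : Fin m) (c : Fin n) (ω : Fin n → Fin m) :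
    ballCount (ballSwap a b c ω) a + ballCount (ballSwap a b c ω) b
      = ballCount ω a + ballCount ω b := by
  have ha := ballCount_update_add ω c (Equiv.swap a b (ω c)) a
  have hb := ballCount_update_add ω c (Equiv.swap a b (ω c)) b
  simp only [Equiv.swap_apply_eq_iff, Equiv.swap_apply_left, Equiv.swap_apply_right] at ha hb
  simp only [ballSwap]
  omega

lemma ballCount_ballSwap_left {a b : Fin m} (hab : a ≠ b) {c : Fin n} {ω : Fin n → Fin m}
    (hc : ω c = b) : ballCount (ballSwap a b c ω) a = ballCount ω a + 1 := by
  simpa [ballSwap, hc, hab.symm] using ballCount_update_add ω c (Equiv.swap a b (ω c)) a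

/-- Functions of the configuration not depending on how the balls in the urns `a` and `b` are split
between these two urns. -/
def SwapInvariant (a b : Fin m) (φ : (Fin n → Fin m) → ℝ) : Prop :=
  ∀ c ω, φ (ballSwap a b c ω) = φ ω

lemma swapInvariant_comp_add (a b : Fin m) (f : ℕ → ℝ) :
    SwapInvariant (n := n) a b fun ω => f (ballCount ω a + ballCount ω b) :=
  fun c ω => congrArg f (ballCount_ballSwap_add a b c ω)

namespace SwapInvariant

variable {a b : Fin m} {φ ψ : (Fin n → Fin m) → ℝ}

lemma symm (h : SwapInvariant a b φ) : SwapInvariant b a φ := fun c ω => by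
  rw [ballSwap, Equiv.swap_comm]
  exact h c ω

lemma mul (hφ : SwapInvariant a b φ) (hψ : SwapInvariant a b ψ) :
    SwapInvariant a b fun ω => φ ω * ψ ω := fun c ω => by
  simp only [hφ c ω, hψ c ω]

lemma sum_mul_ballCount_mul (hab : a ≠ b) (h : SwapInvariant a b φ) (f : ℕ → ℝ) :
    ∑ ω, φ ω * (ballCount ω a * f (ballCount ω a))
      = ∑ ω, φ ω * (ballCount ω b * f (ballCount ω a + 1)) := by
  simp only [ballCount_eq_sum _ a, ballCount_eq_sum _ b, Nat.cast_sum, Finset.sum_mul,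
    Finset.mul_sum]
  simp only [← ballCount_eq_sum]
  rw [Finset.sum_comm]
  conv_rhs => rw [Finset.sum_comm]
  refine Finset.sum_congr rfl fun c _ => ?_
  rw [← Equiv.sum_comp (ballSwap_involutive a b c).toPerm]
  refine Finset.sum_congr rfl fun ω _ => ?_
  simp only [Function.Involutive.coe_toPerm, h c ω, ballSwap_apply_self,
    Equiv.swap_apply_eq_iff, Equiv.swap_apply_left]
  by_cases hc : ω c = b
  · rw [ballCount_ballSwap_left hab hc, if_pos hc]
  · simp [hc]

lemma sum_mul_indicator_eq_choose (hab : a ≠ b) (h : SwapInvariant a b φ) (k : ℕ) :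
    ∑ ω, φ ω * (if ballCount ω a = k then 1 else 0)
      = ∑ ω, φ ω * (ballCount ω a + ballCount ω b).choose k
          * (if ballCount ω a = 0 then 1 else 0) := by
  induction k generalizing φ with
  | zero => simp
  | succ k ih =>
    refine mul_left_cancel₀ k.cast_add_one_ne_zero ?_
    calc (k + 1 : ℝ) * ∑ ω, φ ω * (if ballCount ω a = k + 1 then 1 else 0)
        = ∑ ω, φ ω * (ballCount ω a * (if ballCount ω a = k + 1 then 1 else 0)) := by
          rw [Finset.mul_sum]
          refine Finset.sum_congr rfl fun ω _ => ?_
          split_ifs with hk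
          · rw [hk]
            push_cast
            ring
          · ring
      _ = ∑ ω, φ ω * (ballCount ω b * (if ballCount ω a + 1 = k + 1 then 1 else 0)) :=
          h.sum_mul_ballCount_mul hab fun l => if l = k + 1 then 1 else 0
      _ = ∑ ω, φ ω * ((ballCount ω a + ballCount ω b : ℕ) - k : ℝ)
            * (if ballCount ω a = k then 1 else 0) := by
          refine Finset.sum_congr rfl fun ω _ => ?_
          by_cases hk : ballCount ω a = k <;> simp [hk]
      _ = ∑ ω, φ ω * ((ballCount ω a + ballCount ω b : ℕ) - k : ℝ)
            * (ballCount ω a + ballCount ω b).choose k * (if ballCount ω a = 0 then 1 else 0) :=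
          ih (h.mul (swapInvariant_comp_add a b fun s => (s : ℝ) - k))
      _ = _ := by
          rw [Finset.mul_sum]
          refine Finset.sum_congr rfl fun ω _ => ?_
          linear_combination (-φ ω * (if ballCount ω a = 0 then (1 : ℝ) else 0))
            * succ_mul_cast_choose_succ (ballCount ω a + ballCount ω b) k

lemma sum_eq_sum_mul_two_pow (hab : a ≠ b) (h : SwapInvariant a b φ) :
    ∑ ω, φ ω = ∑ ω, φ ω * 2 ^ (ballCount ω a + ballCount ω b)
      * (if ballCount ω a = 0 then 1 else 0) := by
  calc ∑ ω, φ ω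
      = ∑ k ∈ Finset.range (n + 1), ∑ ω, φ ω * (if ballCount ω a = k then 1 else 0) := by
        rw [Finset.sum_comm]
        exact Finset.sum_congr rfl fun ω _ => by simp [Nat.lt_succ_iff.2 (ballCount_le ω a)]
    _ = ∑ ω, ∑ k ∈ Finset.range (n + 1), φ ω * (ballCount ω a + ballCount ω b).choose k
          * (if ballCount ω a = 0 then 1 else 0) := by
        exact (Finset.sum_congr rfl fun k _ => h.sum_mul_indicator_eq_choose hab k).trans
          Finset.sum_comm
    _ = _ := by
        refine Finset.sum_congr rfl fun ω _ => ?_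
        split_ifs with ha
        · rw [ha, zero_add, ← Finset.sum_mul, ← Finset.mul_sum]
          exact_mod_cast congrArg (φ ω * · * 1) (congrArg (Nat.cast (R := ℝ))
            (sum_range_choose_of_le (ballCount_le ω b)))
        · simp

/-- Given the total content of the two urns, each of these balls is in either urn with equal
probability. -/
lemma expect_mul_indicator (hab : a ≠ b) (h : SwapInvariant a b φ) (d : ℕ) :
    𝔼 ω, φ ω * (if ballCount ω a = d then 1 else 0)
      = 𝔼 ω, φ ω * fairBinom d (ballCount ω a + ballCount ω b) := by
  rw [Finset.expect_eq_sum_div_card, Finset.expect_eq_sum_div_card,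
    (h.mul (swapInvariant_comp_add a b (fairBinom d))).sum_eq_sum_mul_two_pow hab,
    h.sum_mul_indicator_eq_choose hab]
  congr 1
  exact Finset.sum_congr rfl fun ω _ => by rw [fairBinom]; field_simp

end SwapInvariant

lemma expect_indicator_ballCount (a : Fin m) (d : ℕ) :
    𝔼 ω : Fin n → Fin m, (if ballCount ω a = d then (1 : ℝ) else 0) = urnProb n m d := by
  have hm : (m : ℝ) ≠ 0 := by exact_mod_cast a.pos.ne'
  have hsymm (b : Fin m) : 𝔼 ω : Fin n → Fin m, (if ballCount ω b = d then (1 : ℝ) else 0)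
      = 𝔼 ω : Fin n → Fin m, (if ballCount ω a = d then (1 : ℝ) else 0) := by
    rcases eq_or_ne b a with rfl | hba
    · rfl
    · have hconst : SwapInvariant (n := n) b a fun _ => 1 := fun _ _ => rfl
      have hb := hconst.expect_mul_indicator hba d
      have ha := hconst.symm.expect_mul_indicator hba.symm d
      simp only [one_mul] at ha hb
      simp only [ha, hb, add_comm]
  simp only [urnProb, urnSum, Pi.single_apply, Finset.expect_sum_comm, hsymm]
  simp [hm]

/-- The part of the indicators of the events that `a` and that `b` contains `d` balls which is
orthogonal to the `SwapInvariant a b` functions. -/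
noncomputable def pairFluct (d : ℕ) (a b : Fin m) (ω : Fin n → Fin m) : ℝ :=
  (if ballCount ω a = d then 1 else 0) + (if ballCount ω b = d then 1 else 0)
    - 2 * fairBinom d (ballCount ω a + ballCount ω b)

lemma SwapInvariant.expect_mul_pairFluct {a b : Fin m} (hab : a ≠ b)
    {φ : (Fin n → Fin m) → ℝ} (h : SwapInvariant a b φ) (d : ℕ) :
    𝔼 ω, φ ω * pairFluct d a b ω = 0 := by
  have ha := h.expect_mul_indicator hab d
  have hb := h.symm.expect_mul_indicator hab.symm d
  simp only [add_comm (ballCount _ b)] at hb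
  simp only [pairFluct, mul_sub, mul_add, Finset.expect_sub_distrib, Finset.expect_add_distrib,
    mul_left_comm _ (2 : ℝ), ← Finset.mul_expect, ha, hb]
  ring

lemma urnProb_div_two_le_expect_pairFluct_sq {d : ℕ} (hd : 2 ≤ d) {a b : Fin m} (hab : a ≠ b) :
    urnProb n m d / 2 ≤ 𝔼 ω : Fin n → Fin m, pairFluct d a b ω ^ 2 := by
  have horth :=
    (swapInvariant_comp_add (n := n) a b fun s => 2 * fairBinom d s).expect_mul_pairFluct hab d
  calc urnProb n m d / 2 = 𝔼 ω : Fin n → Fin m, ((if ballCount ω a = d then (1 : ℝ) else 0)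
      + (if ballCount ω b = d then 1 else 0)) / 4 := by
        rw [← Finset.expect_div, Finset.expect_add_distrib, expect_indicator_ballCount,
          expect_indicator_ballCount]
        ring
    _ ≤ 𝔼 ω : Fin n → Fin m, (pairFluct d a b ω ^ 2
        + 2 * fairBinom d (ballCount ω a + ballCount ω b) * pairFluct d a b ω) := by
        refine Finset.expect_le_expect fun ω _ => ?_
        have hfair := fairBinom_le hd (ballCount ω a + ballCount ω b)
        rw [pairFluct]
        split_ifs <;> linarith
    _ = _ := by rw [Finset.expect_add_distrib, horth, add_zero]

lemma swapInvariant_pairFluct (d : ℕ) {a b a' b' : Fin m} (haa : a' ≠ a) (hab : a' ≠ b)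
    (hba : b' ≠ a) (hbb : b' ≠ b) : SwapInvariant (n := n) a b (pairFluct d a' b') := fun c ω => by
  rw [pairFluct, pairFluct, ballCount_ballSwap_of_ne haa hab, ballCount_ballSwap_of_ne hba hbb]

lemma swapInvariant_urnSum_sub_pairFluct (d : ℕ) {a b : Fin m} (hab : a ≠ b) :
    SwapInvariant (n := n) a b fun ω => urnSum (Pi.single d 1) ω - pairFluct d a b ω := by
  have hω (ω : Fin n → Fin m) : urnSum (Pi.single d 1) ω - pairFluct d a b ω
      = ∑ i ∈ (Finset.univ.erase a).erase b, (Pi.single d 1 : ℕ → ℝ) (ballCount ω i)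
        + 2 * fairBinom d (ballCount ω a + ballCount ω b) := by
    rw [urnSum, ← Finset.add_sum_erase _ _ (Finset.mem_univ a),
      ← Finset.add_sum_erase _ _ (Finset.mem_erase.2 ⟨hab.symm, Finset.mem_univ b⟩), pairFluct,
      Pi.single_apply, Pi.single_apply]
    ring
  intro c ω
  simp only [hω, ballCount_ballSwap_add]
  refine congrArg (· + _) (Finset.sum_congr rfl fun i hi => ?_)
  simp only [Finset.mem_erase] at hi
  rw [ballCount_ballSwap_of_ne hi.2.1 hi.1]

theorem mul_urnProb_le_uniformVar {d : ℕ} (hd : 2 ≤ d) (hm : 2 ≤ m) :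
    m * urnProb n m d / 6 ≤ uniformVar (urnSum (n := n) (m := m) (Pi.single d 1)) := by
  have : Nonempty (Fin m) := ⟨⟨0, by omega⟩⟩
  let a (j : Fin (m / 2)) : Fin m := ⟨2 * j, by omega⟩
  let b (j : Fin (m / 2)) : Fin m := ⟨2 * j + 1, by omega⟩
  have hab (j) : a j ≠ b j := by simp [a, b]
  have hdisjoint {i j} (hij : i ≠ j) :
      SwapInvariant (n := n) (a j) (b j) (pairFluct d (a i) (b i)) := by
    have hval : (i : ℕ) ≠ j := fun h => hij (Fin.ext h)
    refine swapInvariant_pairFluct d ?_ ?_ ?_ ?_ <;> simp only [a, b, ne_eq, Fin.mk.injEq] <;> omega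
  have hbessel := sum_expect_sq_le_uniformVar (Y := urnSum (n := n) (m := m) (Pi.single d 1))
    (Z := fun j => pairFluct d (a j) (b j))
    (fun j => by simpa using
      SwapInvariant.expect_mul_pairFluct (n := n) (φ := fun _ => 1) (hab j) (fun _ _ => rfl) d)
    (fun j => (swapInvariant_urnSum_sub_pairFluct d (hab j)).expect_mul_pairFluct (hab j) d)
    (fun i j hij => (hdisjoint hij).expect_mul_pairFluct (hab j) d)
  have hsum := (Finset.sum_le_sum fun j (_ : j ∈ Finset.univ) =>
    urnProb_div_two_le_expect_pairFluct_sq (n := n) hd (hab j)).trans hbessel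
  have hfloor : (m : ℝ) ≤ 3 * (m / 2 : ℕ) := by exact_mod_cast (by omega : m ≤ 3 * (m / 2))
  have hq := mul_le_mul_of_nonneg_right hfloor (urnProb_nonneg (n := n) (m := m) d)
  rw [Finset.sum_const, Finset.card_univ, Fintype.card_fin, nsmul_eq_mul] at hsum
  linarith

end BallSwap

/-! ### The Dirichlet form of the ball moves -/

section Dirichlet

variable {n m : ℕ}

/-- The Dirichlet form of the ball moves, normalized so that it compares with the variance without
constants depending on `m`. -/
noncomputable def ballDirichlet (f : (Fin n → Fin m) → ℝ) : ℝ :=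
  (𝔼 ω, carreDuChamp ballMove f f ω) / m

lemma uniformVar_le_ballDirichlet (hm : 0 < m) (f : (Fin n → Fin m) → ℝ) :
    uniformVar f ≤ ballDirichlet f / 2 := by
  have : Nonempty (Fin m) := ⟨⟨0, hm⟩⟩
  refine (uniformVar_le_sum_update f).trans_eq ?_
  simp only [ballDirichlet, carreDuChamp, ← sq, Fintype.sum_prod_type, ballMove, Finset.expect_div,
    Finset.sum_div, Fintype.expect_eq_sum_div_card (ι := Fin m), Fintype.card_fin]

lemma ballDirichlet_smul (c : ℝ) (f : (Fin n → Fin m) → ℝ) :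
    ballDirichlet (c • f) = c ^ 2 * ballDirichlet f := by
  simp only [ballDirichlet, carreDuChamp, ← sq, Pi.smul_apply, smul_eq_mul, ← mul_sub, mul_pow,
    ← Finset.mul_sum, ← Finset.mul_expect, mul_div_assoc]

lemma ballDirichlet_sub_le (f g : (Fin n → Fin m) → ℝ) :
    ballDirichlet (f - g) ≤ 2 * ballDirichlet f + 2 * ballDirichlet g := by
  simp only [ballDirichlet, carreDuChamp]
  rw [← mul_div_assoc, ← mul_div_assoc, ← add_div, Finset.mul_expect, Finset.mul_expect,
    ← Finset.expect_add_distrib]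
  refine div_le_div_of_nonneg_right (Finset.expect_le_expect fun ω _ => ?_) (Nat.cast_nonneg m)
  rw [Finset.mul_sum, Finset.mul_sum, ← Finset.sum_add_distrib]
  refine Finset.sum_le_sum fun p _ => ?_
  simp only [Pi.sub_apply]
  linarith [sq_nonneg (f ω - f (ballMove ω p) + (g ω - g (ballMove ω p)))]

lemma expect_sum_comp_ballMove (g : (Fin n → Fin m) → ℝ) :
    𝔼 ω, ∑ p, g (ballMove ω p) = n * m * 𝔼 ω, g ω := by
  simp only [Finset.expect_eq_sum_div_card]
  rw [← reversibleMoves_ballMove fun ω _ => g ω]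
  simp [← Finset.mul_sum, mul_div_assoc]

lemma ballDirichlet_mul_le (hm : 0 < m) {f : (Fin n → Fin m) → ℝ} {c τ : ℝ}
    (hc : ∀ ω, |f ω| ≤ c) (hτ : ∀ ω p, |f ω - f (ballMove ω p)| ≤ τ) (g : (Fin n → Fin m) → ℝ) :
    ballDirichlet (f * g)
      ≤ 2 * c ^ 2 * ballDirichlet g + 2 * τ ^ 2 * (n * 𝔼 ω, g ω ^ 2) := by
  have hpoint (ω : Fin n → Fin m) (p : Fin n × Fin m) :
      ((f * g) ω - (f * g) (ballMove ω p)) ^ 2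
        ≤ 2 * c ^ 2 * (g ω - g (ballMove ω p)) ^ 2 + 2 * τ ^ 2 * g (ballMove ω p) ^ 2 := by
    calc ((f * g) ω - (f * g) (ballMove ω p)) ^ 2
        = (f ω * (g ω - g (ballMove ω p)) + (f ω - f (ballMove ω p)) * g (ballMove ω p)) ^ 2 := by
          simp only [Pi.mul_apply]
          ring
      _ ≤ 2 * (f ω ^ 2 * (g ω - g (ballMove ω p)) ^ 2)
            + 2 * ((f ω - f (ballMove ω p)) ^ 2 * g (ballMove ω p) ^ 2) := by
          rw [← mul_pow, ← mul_pow, ← mul_add]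
          exact add_sq_le
      _ ≤ 2 * (c ^ 2 * (g ω - g (ballMove ω p)) ^ 2) + 2 * (τ ^ 2 * g (ballMove ω p) ^ 2) := by
          have hcsq : f ω ^ 2 ≤ c ^ 2 := sq_le_sq.2 ((hc ω).trans (le_abs_self c))
          have hτsq : (f ω - f (ballMove ω p)) ^ 2 ≤ τ ^ 2 :=
            sq_le_sq.2 ((hτ ω p).trans (le_abs_self τ))
          gcongr
      _ = _ := by ring
  have hm' : (0 : ℝ) < m := by positivity
  rw [ballDirichlet, div_le_iff₀ hm']
  calc 𝔼 ω, carreDuChamp ballMove (f * g) (f * g) ω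
      ≤ 𝔼 ω, ∑ p, (2 * c ^ 2 * (g ω - g (ballMove ω p)) ^ 2 + 2 * τ ^ 2 * g (ballMove ω p) ^ 2) :=
        Finset.expect_le_expect fun ω _ => Finset.sum_le_sum fun p _ => by
          rw [← sq]
          exact hpoint ω p
    _ = 2 * c ^ 2 * 𝔼 ω, carreDuChamp ballMove g g ω + 2 * τ ^ 2 * (n * m * 𝔼 ω, g ω ^ 2) := by
        rw [← expect_sum_comp_ballMove fun ω => g ω ^ 2]
        simp only [carreDuChamp, ← sq, Finset.sum_add_distrib, Finset.expect_add_distrib,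
          ← Finset.mul_sum, ← Finset.mul_expect]
    _ = _ := by
        rw [ballDirichlet]
        field_simp

lemma sum_urnProb_mul_pred (hm : 0 < m) (F : ℕ → ℝ) :
    ∑ k ∈ Finset.range (n + 1), urnProb n m k * ((m - 1) * k * F (k - 1))
      = ∑ k ∈ Finset.range (n + 1), urnProb n m k * ((n - k) * F k) := by
  rw [Finset.sum_range_succ', Finset.sum_range_succ _ n]
  simp only [Nat.cast_zero, mul_zero, zero_mul, add_zero, sub_self, Nat.add_sub_cancel]
  refine Finset.sum_congr rfl fun k _ => ?_
  push_cast
  linear_combination F k * urnProb_detailed_balance (n := n) hm k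

lemma sq_urnSum_sub_ballMove_le (φ : ℕ → ℝ) {ω : Fin n → Fin m} {p : Fin n × Fin m}
    (h : ω p.1 ≠ p.2) :
    (urnSum φ ω - urnSum φ (ballMove ω p)) ^ 2
      ≤ 4 * (φ (ballCount ω (ω p.1) - 1 + 1) ^ 2 + φ (ballCount ω (ω p.1) - 1) ^ 2
        + (φ (ballCount ω p.2 + 1) ^ 2 + φ (ballCount ω p.2) ^ 2)) := by
  have hdiff (a b : ℝ) : (a - b) ^ 2 ≤ 2 * (a ^ 2 + b ^ 2) := by linarith [sq_nonneg (a + b)]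
  rw [urnSum_sub_ballMove φ h]
  simp only [fwdDiff]
  refine (hdiff _ _).trans ?_
  linarith [hdiff (φ (ballCount ω (ω p.1) - 1 + 1)) (φ (ballCount ω (ω p.1) - 1)),
    hdiff (φ (ballCount ω p.2 + 1)) (φ (ballCount ω p.2))]

lemma carreDuChamp_urnSum_self_le (φ : ℕ → ℝ) (ω : Fin n → Fin m) :
    carreDuChamp ballMove (urnSum φ) (urnSum φ) ω
      ≤ urnSum (fun k => 4 * ((m - 1) * k * (φ (k - 1 + 1) ^ 2 + φ (k - 1) ^ 2)
          + (n - k) * (φ (k + 1) ^ 2 + φ k ^ 2))) ω := by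
  set A : ℕ → ℝ := fun k => 4 * (φ (k - 1 + 1) ^ 2 + φ (k - 1) ^ 2) with hA
  set B : ℕ → ℝ := fun k => 4 * (φ (k + 1) ^ 2 + φ k ^ 2) with hB
  calc carreDuChamp ballMove (urnSum φ) (urnSum φ) ω
      ≤ ∑ p : Fin n × Fin m,
          if ω p.1 = p.2 then 0 else A (ballCount ω (ω p.1)) + B (ballCount ω p.2) := by
        refine Finset.sum_le_sum fun p _ => ?_
        rw [← sq]
        split_ifs with h
        · rw [ballMove_of_eq h, sub_self, zero_pow two_ne_zero]
        · exact (sq_urnSum_sub_ballMove_le φ h).trans_eq (mul_add _ _ _)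
    _ = urnSum (fun k => (m - 1) * k * A k + (n - k) * B k) ω := by
        rw [sum_ballMove_eq (F := fun a c => A a + B c) (fun p h => if_pos h) fun p h => if_neg h]
        simp only [mul_add, Finset.sum_add_distrib, ← Finset.mul_sum, ← Finset.sum_mul,
          sum_ballCount, Finset.sum_const, Finset.card_univ, Fintype.card_fin, nsmul_eq_mul, urnSum,
          sub_mul, Finset.sum_sub_distrib, one_mul, mul_assoc, mul_left_comm _ (m : ℝ)]
        ring
    _ = _ := congrArg (urnSum · ω) (funext fun k => by simp only [hA, hB]; ring)

theorem ballDirichlet_urnSum_le (hm : 0 < m) (φ : ℕ → ℝ) :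
    ballDirichlet (urnSum (n := n) (m := m) φ)
      ≤ 8 * ∑ k ∈ Finset.range (n + 1), urnProb n m k * (m * k + n) * φ k ^ 2 := by
  have hm' : (0 : ℝ) < m := by positivity
  have hexpect := Finset.expect_le_expect fun ω (_ : ω ∈ Finset.univ) =>
    carreDuChamp_urnSum_self_le (n := n) (m := m) φ ω
  have hsucc : ∑ k ∈ Finset.range (n + 1), urnProb n m k * ((m - 1) * k * φ (k - 1 + 1) ^ 2)
      = ∑ k ∈ Finset.range (n + 1), urnProb n m k * ((m - 1) * k * φ k ^ 2) :=
    Finset.sum_congr rfl fun k _ => by rcases k with _ | k <;> simp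
  have hsum : ∑ k ∈ Finset.range (n + 1), urnProb n m k
        * (4 * ((m - 1) * k * (φ (k - 1 + 1) ^ 2 + φ (k - 1) ^ 2)
          + (n - k) * (φ (k + 1) ^ 2 + φ k ^ 2)))
      = 8 * ∑ k ∈ Finset.range (n + 1), urnProb n m k * ((m - 1) * k + (n - k)) * φ k ^ 2 := by
    simp only [mul_left_comm _ (4 : ℝ), ← Finset.mul_sum, mul_add, add_mul, mul_assoc,
      Finset.sum_add_distrib] at hsucc ⊢
    have hself := sum_urnProb_mul_pred (n := n) hm fun k => φ k ^ 2
    have hpred := sum_urnProb_mul_pred (n := n) hm fun k => φ (k + 1) ^ 2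
    simp only [mul_assoc] at hself hpred
    linarith
  rw [expect_urnSum hm, hsum] at hexpect
  rw [ballDirichlet, div_le_iff₀ hm', mul_comm]
  refine hexpect.trans (mul_le_mul_of_nonneg_left ?_ hm'.le)
  gcongr with k
  · exact urnProb_nonneg k
  · exact sub_le_self _ zero_le_one
  · exact sub_le_self _ k.cast_nonneg

lemma expect_sq_urnSum_le (hm : 0 < m) (φ : ℕ → ℝ) :
    𝔼 ω : Fin n → Fin m, urnSum φ ω ^ 2
      ≤ m ^ 2 * ∑ k ∈ Finset.range (n + 1), urnProb n m k * φ k ^ 2 := by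
  calc 𝔼 ω : Fin n → Fin m, urnSum φ ω ^ 2
      ≤ 𝔼 ω : Fin n → Fin m, m * urnSum (fun k => φ k ^ 2) ω := by
        refine Finset.expect_le_expect fun ω _ => ?_
        simpa [urnSum] using
          sq_sum_le_card_mul_sum_sq (s := Finset.univ) (f := fun i => φ (ballCount ω i))
    _ = _ := by
        rw [← Finset.mul_expect, expect_urnSum hm]
        ring

lemma urnSum_smul (c : ℝ) (φ : ℕ → ℝ) :
    urnSum (n := n) (m := m) (c • φ) = c • urnSum φ := by
  funext ω
  simp [urnSum, Finset.mul_sum]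

lemma abs_urnSum_le {φ : ℕ → ℝ} {c : ℝ} (hc : ∀ k, |φ k| ≤ c) (ω : Fin n → Fin m) :
    |urnSum φ ω| ≤ m * c := by
  refine (Finset.abs_sum_le_sum_abs _ _).trans ?_
  simpa using Finset.sum_le_sum fun i (_ : i ∈ Finset.univ) => hc (ballCount ω i)

lemma abs_urnSum_le_of_le_mul {φ : ℕ → ℝ} {c : ℝ} (hc : ∀ k : ℕ, |φ k| ≤ k * c)
    (ω : Fin n → Fin m) : |urnSum φ ω| ≤ n * c := by
  refine (Finset.abs_sum_le_sum_abs _ _).trans ?_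
  rw [← sum_ballCount ω, Finset.sum_mul]
  exact Finset.sum_le_sum fun i _ => hc (ballCount ω i)

end Dirichlet

/-! ### Functions of the occupation number supported near `d` -/

section NearLevel

variable {n m d : ℕ}

/-- The order of magnitude, for fixed `d`, of the variances that enter the Berry–Esseen bound. -/
noncomputable def levelScale (n m d : ℕ) : ℝ := m * urnProb n m d * (1 + n / m : ℝ) ^ 4

/-- Functions supported on `{d - 1, d, d + 1}` of the size of the coefficients that the ball moves
produce from the indicator of `d`: at `d - 1` a ball can only be received, which has rate `α`, while
at `d` and `d + 1` it can also be lost. -/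
structure NearLevel (d : ℕ) (α K : ℝ) (φ : ℕ → ℝ) : Prop where
  eq_zero : ∀ k, k ≠ d - 1 → k ≠ d → k ≠ d + 1 → φ k = 0
  pred : |φ (d - 1)| ≤ K * α
  self : |φ d| ≤ K * (1 + α)
  succ : |φ (d + 1)| ≤ K * (1 + α)

lemma levelScale_nonneg : 0 ≤ levelScale n m d :=
  mul_nonneg (mul_nonneg m.cast_nonneg (urnProb_nonneg d)) (by positivity)

lemma urnProb_succ_le (hm : 2 ≤ m) (d : ℕ) :
    urnProb n m (d + 1) ≤ 2 * (n / m) * urnProb n m d := by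
  have hm' : (2 : ℝ) ≤ m := by exact_mod_cast hm
  have hd : (0 : ℝ) ≤ d := d.cast_nonneg
  rw [urnProb_succ hm]
  refine mul_le_mul_of_nonneg_right ?_ (urnProb_nonneg d)
  calc ((n : ℝ) - d) / ((m - 1) * (d + 1)) ≤ n / (m / 2) := by
        gcongr
        · exact sub_le_self _ hd
        · nlinarith [mul_nonneg hd (by linarith : (0 : ℝ) ≤ m - 1)]
    _ = 2 * (n / m) := by field_simp

lemma div_mul_urnProb_pred_le (hm : 0 < m) (hd : 1 ≤ d) (hdn : d ≤ n) :
    n / m * urnProb n m (d - 1) ≤ d ^ 2 * urnProb n m d := by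
  obtain ⟨e, rfl⟩ := Nat.exists_eq_add_of_le' hd
  have hm' : (0 : ℝ) < m := by positivity
  have hn : (n : ℝ) ≤ (e + 1) * (n - e) := by
    have hen : (e : ℝ) + 1 ≤ n := by exact_mod_cast hdn
    nlinarith [(e.cast_nonneg : (0 : ℝ) ≤ e)]
  rw [Nat.add_sub_cancel, div_mul_eq_mul_div, div_le_iff₀ hm']
  push_cast
  calc n * urnProb n m e ≤ (e + 1) * (n - e) * urnProb n m e :=
        mul_le_mul_of_nonneg_right hn (urnProb_nonneg e)
    _ = (e + 1) ^ 2 * urnProb n m (e + 1) * (m - 1) := by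
        rw [mul_assoc, ← urnProb_detailed_balance hm]
        ring
    _ ≤ (e + 1) ^ 2 * urnProb n m (e + 1) * m := by
        have := urnProb_nonneg (n := n) (m := m) (e + 1)
        gcongr
        exact sub_le_self _ zero_le_one

lemma add_le_mul_one_add {c α : ℝ} (hc : 1 ≤ c) (hα : 0 ≤ α) : c + α ≤ c * (1 + α) := by
  nlinarith

lemma rate_mul_urnProb_pred_le (hd : 2 ≤ d) (hdn : d ≤ n) (hm : 0 < m) {α : ℝ} (hα : α = n / m) :
    urnProb n m (d - 1) * (d - 1 + α) * α ^ 2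
      ≤ (d - 1) * d ^ 2 * (urnProb n m d * (1 + α) ^ 4) := by
  have hd1 : (1 : ℝ) ≤ d - 1 := by
    have : (2 : ℝ) ≤ d := by exact_mod_cast hd
    linarith
  have hα0 : 0 ≤ α := by rw [hα]; positivity
  have hq : 0 ≤ urnProb n m d := urnProb_nonneg d
  have : 0 ≤ urnProb n m (d - 1) := urnProb_nonneg (d - 1)
  have hpred : α * urnProb n m (d - 1) ≤ d ^ 2 * urnProb n m d := by
    rw [hα]
    exact div_mul_urnProb_pred_le hm (by omega) hdn
  have hrate : (d - 1 + α) * α ≤ (d - 1) * (1 + α) ^ 3 :=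
    calc (d - 1 + α) * α ≤ (d - 1) * (1 + α) * (1 + α) ^ 2 :=
          mul_le_mul (add_le_mul_one_add hd1 hα0) (by nlinarith) hα0 (by positivity)
      _ = _ := by ring
  calc urnProb n m (d - 1) * (d - 1 + α) * α ^ 2
      = α * urnProb n m (d - 1) * ((d - 1 + α) * α) := by ring
    _ ≤ d ^ 2 * urnProb n m d * ((d - 1) * (1 + α) ^ 3) :=
        mul_le_mul hpred hrate (by positivity) (by positivity)
    _ = (d - 1) * d ^ 2 * (urnProb n m d * (1 + α) ^ 3) := by ring
    _ ≤ _ := by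
        gcongr
        · linarith
        · norm_num

lemma rate_mul_urnProb_le (hd : 2 ≤ d) (hdn : d ≤ n) (hm : 2 ≤ m) {α : ℝ} (hα : α = n / m) :
    urnProb n m (d - 1) * (d - 1 + α) * α ^ 2
        + (urnProb n m d * (d + α) + urnProb n m (d + 1) * (d + 1 + α)) * (1 + α) ^ 2
      ≤ 2 * d ^ 3 * (urnProb n m d * (1 + α) ^ 4) := by
  have hd' : (2 : ℝ) ≤ d := by exact_mod_cast hd
  have hα0 : 0 ≤ α := by rw [hα]; positivity
  have hq : 0 ≤ urnProb n m d := urnProb_nonneg d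
  have hpred := rate_mul_urnProb_pred_le hd hdn (by omega) hα
  have hself : urnProb n m d * (d + α) * (1 + α) ^ 2 ≤ d * (urnProb n m d * (1 + α) ^ 4) :=
    calc urnProb n m d * (d + α) * (1 + α) ^ 2
        ≤ urnProb n m d * (d * (1 + α)) * (1 + α) ^ 2 := by
          gcongr
          exact add_le_mul_one_add (by linarith) hα0
      _ = d * (urnProb n m d * (1 + α) ^ 3) := by ring
      _ ≤ _ := by
          gcongr
          · linarith
          · norm_num
  have hsucc : urnProb n m (d + 1) * (d + 1 + α) * (1 + α) ^ 2
      ≤ 2 * (d + 1) * (urnProb n m d * (1 + α) ^ 4) :=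
    calc urnProb n m (d + 1) * (d + 1 + α) * (1 + α) ^ 2
        ≤ 2 * (1 + α) * urnProb n m d * ((d + 1) * (1 + α)) * (1 + α) ^ 2 := by
          have : urnProb n m (d + 1) ≤ 2 * (1 + α) * urnProb n m d :=
            (urnProb_succ_le hm d).trans (by rw [← hα]; gcongr; linarith)
          gcongr
          exact add_le_mul_one_add (by linarith) hα0
      _ = _ := by ring
  have hcoef : (d - 1) * d ^ 2 + d + 2 * (d + 1) ≤ 2 * (d : ℝ) ^ 3 := by
    nlinarith [mul_nonneg (sub_nonneg.2 hd') (sq_nonneg (d : ℝ))]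
  have hqα : 0 ≤ urnProb n m d * (1 + α) ^ 4 := by positivity
  linarith [mul_le_mul_of_nonneg_right hcoef hqα]

namespace NearLevel

lemma of_fwdDiff_single {α K : ℝ} {φ u v : ℕ → ℝ} (hd : 2 ≤ d)
    (hφ : ∀ k, φ k = u k * Δ_[1] (Pi.single d 1 : ℕ → ℝ) (k - 1)
      + v k * Δ_[1] (Pi.single d 1 : ℕ → ℝ) k)
    (hzero : u 0 = 0) (hpred : |v (d - 1)| ≤ K * α) (hself : |u d - v d| ≤ K * (1 + α))
    (hsucc : |u (d + 1)| ≤ K * (1 + α)) : NearLevel d α K φ := by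
  obtain ⟨e, rfl⟩ := Nat.exists_eq_add_of_le' hd
  refine ⟨fun k hk1 hk2 hk3 => ?_, ?_, ?_, ?_⟩
  · rw [hφ k]
    rcases k with _ | k
    · simp [hzero, fwdDiff]
    · have : k ≠ e + 2 := by omega
      have : k ≠ e := by omega
      have : k ≠ e + 1 := by omega
      simp [fwdDiff, *]
  · rw [hφ]
    simpa [fwdDiff, Pi.single_apply] using hpred
  · rw [hφ]
    simpa [fwdDiff, Pi.single_apply, sub_eq_add_neg] using hself
  · rw [hφ]
    simpa [fwdDiff, Pi.single_apply] using hsucc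

lemma mul_fwdDiff_single (hd : 2 ≤ d) {α : ℝ} (hα : 0 ≤ α) :
    NearLevel d α (d + 1) fun k => k * Δ_[1] (Pi.single d 1 : ℕ → ℝ) (k - 1) := by
  have hdα : 0 ≤ d * α := by positivity
  refine of_fwdDiff_single (u := fun k => k) (v := fun _ => 0) hd (fun k => by ring) Nat.cast_zero
    ?_ ?_ ?_
  · rw [abs_zero]
    positivity
  · rw [sub_zero, Nat.abs_cast]
    linarith
  · rw [Nat.abs_cast]
    push_cast
    linarith

lemma smul_fwdDiff_single (hd : 2 ≤ d) {α : ℝ} (hα : 0 ≤ α) :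
    NearLevel d α 1 (α • Δ_[1] (Pi.single d 1 : ℕ → ℝ)) := by
  refine of_fwdDiff_single (u := fun _ => 0) (v := fun _ => α) hd (fun k => by simp) rfl ?_ ?_ ?_
  · rw [abs_of_nonneg hα, one_mul]
  · rw [zero_sub, abs_neg, abs_of_nonneg hα]
    linarith
  · rw [abs_zero]
    linarith

variable {α K : ℝ} {φ : ℕ → ℝ}

lemma sum_mul_sq_le (hd : 1 ≤ d) (h : NearLevel d α K φ) {w : ℕ → ℝ} (hw : ∀ k, 0 ≤ w k)
    (s : Finset ℕ) :
    ∑ k ∈ s, w k * φ k ^ 2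
      ≤ K ^ 2 * (w (d - 1) * α ^ 2 + (w d + w (d + 1)) * (1 + α) ^ 2) := by
  have hterm (k : ℕ) : 0 ≤ w k * φ k ^ 2 := mul_nonneg (hw k) (sq_nonneg _)
  have hpred : w (d - 1) * φ (d - 1) ^ 2 ≤ w (d - 1) * (K * α) ^ 2 :=
    mul_le_mul_of_nonneg_left (sq_le_sq.2 (h.pred.trans (le_abs_self _))) (hw _)
  have hself : w d * φ d ^ 2 ≤ w d * (K * (1 + α)) ^ 2 :=
    mul_le_mul_of_nonneg_left (sq_le_sq.2 (h.self.trans (le_abs_self _))) (hw _)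
  have hsucc : w (d + 1) * φ (d + 1) ^ 2 ≤ w (d + 1) * (K * (1 + α)) ^ 2 :=
    mul_le_mul_of_nonneg_left (sq_le_sq.2 (h.succ.trans (le_abs_self _))) (hw _)
  calc ∑ k ∈ s, w k * φ k ^ 2
      = ∑ k ∈ s with k ∈ ({d - 1, d, d + 1} : Finset ℕ), w k * φ k ^ 2 := by
        refine (Finset.sum_filter_of_ne fun k _ hk => ?_).symm
        contrapose! hk
        simp only [Finset.mem_insert, Finset.mem_singleton, not_or] at hk
        rw [h.eq_zero k hk.1 hk.2.1 hk.2.2]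
        ring
    _ ≤ ∑ k ∈ ({d - 1, d, d + 1} : Finset ℕ), w k * φ k ^ 2 :=
        Finset.sum_le_sum_of_subset_of_nonneg (fun k hk => (Finset.mem_filter.1 hk).2)
          fun k _ _ => hterm k
    _ = w (d - 1) * φ (d - 1) ^ 2 + (w d * φ d ^ 2 + w (d + 1) * φ (d + 1) ^ 2) := by
        have hnotMem : d - 1 ∉ ({d, d + 1} : Finset ℕ) := by
          simp only [Finset.mem_insert, Finset.mem_singleton]
          omega
        rw [Finset.sum_insert hnotMem, Finset.sum_pair (by omega)]
    _ ≤ _ := by linarith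

theorem ballDirichlet_le (hd : 2 ≤ d) (hdn : d ≤ n) (hm : 2 ≤ m) (h : NearLevel d (n / m) K φ) :
    ballDirichlet (urnSum (n := n) (m := m) φ) ≤ 16 * d ^ 3 * K ^ 2 * levelScale n m d := by
  have : (0 : ℝ) < m := by positivity
  have hrate := rate_mul_urnProb_le hd hdn hm rfl
  have hn : (n : ℝ) = m * (n / m) := by field_simp
  rw [levelScale]
  set α : ℝ := n / m
  have hsum := h.sum_mul_sq_le (by omega) (w := fun k => urnProb n m k * (m * k + n))
    (fun k => mul_nonneg (urnProb_nonneg k) (by positivity)) (Finset.range (n + 1))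
  refine (ballDirichlet_urnSum_le (by omega) φ).trans ?_
  calc 8 * ∑ k ∈ Finset.range (n + 1), urnProb n m k * (m * k + n) * φ k ^ 2
      ≤ 8 * K ^ 2 * m * (urnProb n m (d - 1) * (d - 1 + α) * α ^ 2
          + (urnProb n m d * (d + α) + urnProb n m (d + 1) * (d + 1 + α)) * (1 + α) ^ 2) := by
        refine (mul_le_mul_of_nonneg_left hsum (by norm_num)).trans_eq ?_
        rw [hn, Nat.cast_pred (by omega)]
        push_cast
        ring
    _ ≤ 8 * K ^ 2 * m * (2 * d ^ 3 * (urnProb n m d * (1 + α) ^ 4)) := by gcongr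
    _ = _ := by ring

theorem expect_sq_le (hd : 2 ≤ d) (hdn : d ≤ n) (hm : 2 ≤ m) (h : NearLevel d 1 K φ) :
    n * 𝔼 ω : Fin n → Fin m, urnSum φ ω ^ 2 ≤ 3 * d ^ 2 * K ^ 2 * m ^ 2 * levelScale n m d := by
  have : (0 : ℝ) < m := by positivity
  have hd' : (2 : ℝ) ≤ d := by exact_mod_cast hd
  have hpred := div_mul_urnProb_pred_le (n := n) (m := m) (by omega) (by omega) hdn
  have hsucc := urnProb_succ_le (n := n) hm d
  have hn : (n : ℝ) = m * (n / m) := by field_simp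
  rw [levelScale]
  set α : ℝ := n / m
  have hα : 0 ≤ α := by positivity
  set q := urnProb n m
  have hq (k : ℕ) : 0 ≤ q k := urnProb_nonneg k
  have hcoef : d ^ 2 + 4 * α + 8 * α ^ 2 ≤ 3 * d ^ 2 * (1 + α) ^ 4 := by
    have hpow : (1 + α) ^ 2 ≤ (1 + α) ^ 4 := pow_le_pow_right₀ (by linarith) (by norm_num)
    have hd4 : (4 : ℝ) ≤ d ^ 2 := by nlinarith
    calc d ^ 2 + 4 * α + 8 * α ^ 2 ≤ 3 * d ^ 2 * (1 + α) ^ 2 := by nlinarith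
      _ ≤ _ := by gcongr
  calc n * 𝔼 ω : Fin n → Fin m, urnSum φ ω ^ 2
      ≤ n * (m ^ 2 * (K ^ 2 * (q (d - 1) * 1 ^ 2 + (q d + q (d + 1)) * (1 + 1) ^ 2))) := by
        gcongr
        exact (expect_sq_urnSum_le (by omega) φ).trans
          (mul_le_mul_of_nonneg_left (h.sum_mul_sq_le (by omega) hq _) (sq_nonneg _))
    _ = K ^ 2 * m ^ 2 * m * (α * q (d - 1) + 4 * α * q d + 4 * α * q (d + 1)) := by
        rw [hn]
        ring
    _ ≤ K ^ 2 * m ^ 2 * m * (d ^ 2 * q d + 4 * α * q d + 4 * α * (2 * α * q d)) := by gcongr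
    _ = K ^ 2 * m ^ 2 * (m * q d) * (d ^ 2 + 4 * α + 8 * α ^ 2) := by ring
    _ ≤ K ^ 2 * m ^ 2 * (m * q d) * (3 * d ^ 2 * (1 + α) ^ 4) := by
        have := hq d
        gcongr
    _ = _ := by ring

end NearLevel

end NearLevel

/-! ### The Laplacian and the carré du champ of the urn count -/

section UrnCount

variable {n m d : ℕ}

lemma ballDirichlet_moveLaplacian_le (hd : 2 ≤ d) (hdn : d ≤ n) (hm : 2 ≤ m) :
    ballDirichlet (moveLaplacian ballMove (urnSum (n := n) (m := m) (Pi.single d 1)))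
      ≤ 16 * d ^ 3 * (m * (d + 1)) ^ 2 * levelScale n m d := by
  have hm' : (2 : ℝ) ≤ m := by exact_mod_cast hm
  have hd' : (2 : ℝ) ≤ d := by exact_mod_cast hd
  have hdn' : (d : ℝ) ≤ n := by exact_mod_cast hdn
  have hmn : m * (d + 1) * (n / m : ℝ) = (d + 1) * n := by field_simp
  rw [funext (moveLaplacian_urnSum (n := n) (m := m) (Pi.single d 1))]
  refine (NearLevel.of_fwdDiff_single (u := fun k => (m - 1) * k) (v := fun k => -(n - k)) hd
    (fun k => by ring) (by simp) ?_ ?_ ?_).ballDirichlet_le hd hdn hm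
  · rw [abs_neg, Nat.cast_pred (by omega), abs_of_nonneg (by linarith), hmn]
    nlinarith
  · rw [abs_of_nonneg (by nlinarith), mul_one_add, hmn]
    nlinarith
  · push_cast
    rw [abs_of_nonneg (by nlinarith), mul_one_add, hmn]
    nlinarith

lemma NearLevel.ballDirichlet_mul_urnSum_le {f : (Fin n → Fin m) → ℝ} {a K : ℝ} {ψ : ℕ → ℝ}
    (hd : 2 ≤ d) (hdn : d ≤ n) (hm : 2 ≤ m) (hf : ∀ ω, |f ω| ≤ 2 * a)
    (hmove : ∀ ω p, |f ω - f (ballMove ω p)| ≤ 8 / m) (h : NearLevel d (n / m) K (a • ψ))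
    (h_one : NearLevel d 1 K ψ) :
    ballDirichlet (f * urnSum ψ) ≤ 320 * d ^ 3 * K ^ 2 * levelScale n m d := by
  have : (0 : ℝ) < m := by positivity
  have hd' : (2 : ℝ) ≤ d := by exact_mod_cast hd
  have hQ := levelScale_nonneg (n := n) (m := m) (d := d)
  calc ballDirichlet (f * urnSum ψ)
      ≤ 2 * (2 * a) ^ 2 * ballDirichlet (urnSum (n := n) (m := m) ψ)
          + 2 * (8 / m) ^ 2 * (n * 𝔼 ω : Fin n → Fin m, urnSum ψ ω ^ 2) :=
        ballDirichlet_mul_le (by omega) hf hmove _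
    _ = 8 * ballDirichlet (urnSum (n := n) (m := m) (a • ψ))
          + 128 / m ^ 2 * (n * 𝔼 ω : Fin n → Fin m, urnSum ψ ω ^ 2) := by
        rw [urnSum_smul, ballDirichlet_smul]
        ring
    _ ≤ 8 * (16 * d ^ 3 * K ^ 2 * levelScale n m d)
          + 128 / m ^ 2 * (3 * d ^ 2 * K ^ 2 * m ^ 2 * levelScale n m d) := by
        have hdirichlet := h.ballDirichlet_le hd hdn hm
        have hsq := h_one.expect_sq_le hd hdn hm
        gcongr
    _ = 128 * d ^ 3 * K ^ 2 * levelScale n m d + 192 * 2 * d ^ 2 * K ^ 2 * levelScale n m d := by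
        field_simp
        ring
    _ ≤ 128 * d ^ 3 * K ^ 2 * levelScale n m d + 192 * d * d ^ 2 * K ^ 2 * levelScale n m d := by
        gcongr
    _ = _ := by ring

variable {g : ℕ → ℝ}

lemma abs_fwdDiff_le (hm : 0 < m) (hg : ∀ k : ℕ, m * ((k + 1) * |Δ_[1] g k|) ≤ 2) (k : ℕ) :
    |Δ_[1] g k| ≤ 2 / m := by
  have hm' : (0 : ℝ) < m := by positivity
  rw [le_div_iff₀' hm']
  refine le_trans ?_ (hg k)
  gcongr
  exact le_mul_of_one_le_left (abs_nonneg _) (by linarith [(k.cast_nonneg : (0 : ℝ) ≤ k)])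

lemma mul_abs_fwdDiff_le (hm : 0 < m) (hg : ∀ k : ℕ, m * ((k + 1) * |Δ_[1] g k|) ≤ 2) (k : ℕ) :
    k * |Δ_[1] g k| ≤ 2 / m := by
  have hm' : (0 : ℝ) < m := by positivity
  rw [le_div_iff₀' hm']
  refine le_trans ?_ (hg k)
  gcongr
  linarith

lemma mul_abs_fwdDiff_pred_le (hm : 0 < m) (hg : ∀ k : ℕ, m * ((k + 1) * |Δ_[1] g k|) ≤ 2)
    (k : ℕ) : k * |Δ_[1] g (k - 1)| ≤ 2 / m := by
  have hm' : (0 : ℝ) < m := by positivity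
  rcases k with _ | k
  · rw [Nat.cast_zero, zero_mul]
    positivity
  · rw [le_div_iff₀' hm']
    exact_mod_cast hg k

lemma mul_abs_fwdDiff_sub_le (hm : 0 < m) (hg : ∀ k : ℕ, m * ((k + 1) * |Δ_[1] g k|) ≤ 2)
    (k : ℕ) : k * |Δ_[1] g (k - 1) - Δ_[1] g k| ≤ 4 / m :=
  calc k * |Δ_[1] g (k - 1) - Δ_[1] g k| ≤ k * |Δ_[1] g (k - 1)| + k * |Δ_[1] g k| := by
        rw [← mul_add]
        exact mul_le_mul_of_nonneg_left (abs_sub _ _) k.cast_nonneg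
    _ ≤ 2 / m + 2 / m := add_le_add (mul_abs_fwdDiff_pred_le hm hg k) (mul_abs_fwdDiff_le hm hg k)
    _ = 4 / m := by ring

lemma abs_mul_fwdDiff_pred_sub_le (hm : 0 < m) (hg : ∀ k : ℕ, m * ((k + 1) * |Δ_[1] g k|) ≤ 2)
    (k : ℕ) :
    |m * (k * Δ_[1] g (k - 1)) - k * (Δ_[1] g (k - 1) - Δ_[1] g k)| ≤ 6 := by
  have hm' : (1 : ℝ) ≤ m := by exact_mod_cast hm
  calc |m * (k * Δ_[1] g (k - 1)) - k * (Δ_[1] g (k - 1) - Δ_[1] g k)|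
      ≤ m * (k * |Δ_[1] g (k - 1)|) + k * |Δ_[1] g (k - 1) - Δ_[1] g k| := by
        refine (abs_sub _ _).trans_eq ?_
        simp only [abs_mul, Nat.abs_cast]
    _ ≤ m * (2 / m) + 4 / m :=
        add_le_add (mul_le_mul_of_nonneg_left (mul_abs_fwdDiff_pred_le hm hg k) m.cast_nonneg)
          (mul_abs_fwdDiff_sub_le hm hg k)
    _ ≤ 2 + 4 := by
        rw [mul_div_cancel₀ _ (by positivity)]
        gcongr
        exact div_le_self (by norm_num) hm'
    _ = 6 := by norm_num

lemma abs_mul_fwdDiff_add_le (hn : 0 < n) (hm : 0 < m)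
    (hg : ∀ k : ℕ, m * ((k + 1) * |Δ_[1] g k|) ≤ 2) (k : ℕ) :
    |n * Δ_[1] g k + k * (Δ_[1] g (k - 1) - Δ_[1] g k)| ≤ 6 * (n / m) := by
  have hn' : (1 : ℝ) ≤ n := by exact_mod_cast hn
  calc |n * Δ_[1] g k + k * (Δ_[1] g (k - 1) - Δ_[1] g k)|
      ≤ n * |Δ_[1] g k| + k * |Δ_[1] g (k - 1) - Δ_[1] g k| := by
        refine (abs_add_le _ _).trans_eq ?_
        simp only [abs_mul, Nat.abs_cast]
    _ ≤ n * (2 / m) + 4 / m :=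
        add_le_add (mul_le_mul_of_nonneg_left (abs_fwdDiff_le hm hg k) n.cast_nonneg)
          (mul_abs_fwdDiff_sub_le hm hg k)
    _ ≤ n * (2 / m) + n * (4 / m) := by
        gcongr
        exact le_mul_of_one_le_left (by positivity) hn'
    _ = 6 * (n / m) := by ring

lemma NearLevel.carreDuChamp_diagonal (hd : 2 ≤ d) (hn : 0 < n) (hm : 0 < m)
    (hg : ∀ k : ℕ, m * ((k + 1) * |Δ_[1] g k|) ≤ 2) :
    NearLevel d (n / m) 6 fun k =>
      m * (k * Δ_[1] g (k - 1) * Δ_[1] (Pi.single d 1 : ℕ → ℝ) (k - 1))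
        + n * (Δ_[1] g k * Δ_[1] (Pi.single d 1 : ℕ → ℝ) k)
        - k * ((Δ_[1] g (k - 1) - Δ_[1] g k)
          * (Δ_[1] (Pi.single d 1 : ℕ → ℝ) (k - 1) - Δ_[1] (Pi.single d 1 : ℕ → ℝ) k)) := by
  set w : ℕ → ℝ := fun k => k * (Δ_[1] g (k - 1) - Δ_[1] g k) with hw_def
  set u : ℕ → ℝ := fun k => m * (k * Δ_[1] g (k - 1)) - w k with hu_def
  set v : ℕ → ℝ := fun k => n * Δ_[1] g k + w k with hv_def
  have hu (k : ℕ) : |u k| ≤ 6 := abs_mul_fwdDiff_pred_sub_le hm hg k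
  have hv (k : ℕ) : |v k| ≤ 6 * (n / m) := abs_mul_fwdDiff_add_le hn hm hg k
  refine of_fwdDiff_single (u := u) (v := v) hd (fun k => ?_) ?_ (hv _) ?_ ((hu _).trans ?_)
  · simp only [hu_def, hv_def, hw_def]
    ring
  · simp [hu_def, hw_def]
  · linarith [abs_sub (u d) (v d), hu d, hv d]
  · have : (0 : ℝ) ≤ n / m := by positivity
    linarith

theorem ballDirichlet_carreDuChamp_le (hd : 2 ≤ d) (hdn : d ≤ n) (hm : 2 ≤ m)
    (hg : ∀ k : ℕ, m * ((k + 1) * |Δ_[1] g k|) ≤ 2) :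
    ballDirichlet (carreDuChamp ballMove (urnSum (n := n) (m := m) g) (urnSum (Pi.single d 1)))
      ≤ 5000 * d ^ 3 * (d + 1) ^ 2 * levelScale n m d := by
  have hm0 : 0 < m := by omega
  have hm' : (m : ℝ) ≠ 0 := by positivity
  have hα : (0 : ℝ) ≤ n / m := by positivity
  have hmove {φ : ℕ → ℝ} (hφ : ∀ k, |φ k| ≤ 2 / m) (ω : Fin n → Fin m) (p : Fin n × Fin m) :
      |urnSum φ ω - urnSum φ (ballMove ω p)| ≤ 8 / m := by
    refine (abs_urnSum_sub_ballMove_le (c := 2 / m + 2 / m) (fun k => ?_) ω p).trans_eq (by ring)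
    exact (abs_sub _ _).trans (add_le_add (hφ _) (hφ _))
  have hdiag := (NearLevel.carreDuChamp_diagonal hd (by omega) hm0 hg).ballDirichlet_le hd hdn hm
  have hleft := NearLevel.ballDirichlet_mul_urnSum_le (a := 1) hd hdn hm
    (fun ω => (abs_urnSum_le (abs_fwdDiff_le hm0 hg) ω).trans_eq (by field_simp))
    (hmove (abs_fwdDiff_le hm0 hg))
    (by rw [one_smul]; exact NearLevel.mul_fwdDiff_single hd hα)
    (NearLevel.mul_fwdDiff_single hd zero_le_one)
  have hright := NearLevel.ballDirichlet_mul_urnSum_le (f := urnSum fun k => k * Δ_[1] g (k - 1))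
    hd hdn hm
    (fun ω => (abs_urnSum_le_of_le_mul (c := 2 / m) (fun k => by
      rw [abs_mul, Nat.abs_cast]
      exact mul_le_mul_of_nonneg_left (abs_fwdDiff_le hm0 hg _) k.cast_nonneg) ω).trans_eq
        (by ring))
    (hmove fun k => by
      rw [abs_mul, Nat.abs_cast]
      exact mul_abs_fwdDiff_pred_le hm0 hg k)
    (NearLevel.smul_fwdDiff_single hd hα)
    (by simpa using NearLevel.smul_fwdDiff_single hd zero_le_one)
  have hQ := mul_nonneg (pow_nonneg d.cast_nonneg 3) (levelScale_nonneg (n := n) (m := m) (d := d))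
  have hd1 : (1 : ℝ) ≤ (d + 1) ^ 2 := one_le_pow₀ (by linarith [(d.cast_nonneg : (0 : ℝ) ≤ d)])
  rw [carreDuChamp_urnSum]
  refine (ballDirichlet_sub_le _ _).trans ((add_le_add_left (mul_le_mul_of_nonneg_left
    (ballDirichlet_sub_le _ _) zero_le_two) _).trans ?_)
  linarith [mul_le_mul_of_nonneg_right hd1 hQ]

end UrnCount

/-! ### Transfer to the occupancy model -/

section Occupancy

variable {n m d : ℕ}

lemma sqrt_uniformVar_le {f : (Fin n → Fin m) → ℝ} {c : ℝ} (hd : 2 ≤ d) (hm : 2 ≤ m) (hc : 0 ≤ c)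
    (hf : ballDirichlet f ≤ c * levelScale n m d) :
    √(uniformVar f) ≤ √(3 * c) * (1 + n / m) ^ 2
      * √(uniformVar (urnSum (n := n) (m := m) (Pi.single d 1))) := by
  have hV := mul_urnProb_le_uniformVar (n := n) hd hm
  set V := uniformVar (urnSum (n := n) (m := m) (Pi.single d 1))
  have hscale : levelScale n m d ≤ 6 * V * (1 + n / m) ^ 4 :=
    mul_le_mul_of_nonneg_right (by linarith) (by positivity)
  have hV0 : 0 ≤ V := Finset.expect_nonneg fun _ _ => sq_nonneg _
  refine Real.sqrt_le_iff.2 ⟨by positivity, ?_⟩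
  rw [mul_pow, mul_pow, Real.sq_sqrt (by positivity), Real.sq_sqrt hV0]
  calc uniformVar f ≤ ballDirichlet f / 2 := uniformVar_le_ballDirichlet (by omega) f
    _ ≤ c * levelScale n m d / 2 := by gcongr
    _ ≤ c * (6 * V * (1 + n / m) ^ 4) / 2 := by
        gcongr
    _ = _ := by ring

lemma sqrt_uniformVar_moveLaplacian_le (hd : 2 ≤ d) (hdn : d ≤ n) (hm : 2 ≤ m) :
    √(uniformVar (moveLaplacian ballMove (urnSum (n := n) (m := m) (Pi.single d 1))))
      ≤ m * √(3 * (16 * d ^ 3 * (d + 1) ^ 2)) * (1 + n / m) ^ 2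
        * √(uniformVar (urnSum (n := n) (m := m) (Pi.single d 1))) := by
  have hsqrt : √(3 * (16 * d ^ 3 * (m * (d + 1)) ^ 2)) = m * √(3 * (16 * d ^ 3 * (d + 1) ^ 2)) :=
    calc √(3 * (16 * d ^ 3 * (m * (d + 1)) ^ 2))
        = √(m ^ 2 * (3 * (16 * d ^ 3 * (d + 1) ^ 2))) := by ring_nf
      _ = _ := by rw [Real.sqrt_mul (sq_nonneg _), Real.sqrt_sq m.cast_nonneg]
  rw [← hsqrt]
  exact sqrt_uniformVar_le hd hm (by positivity) (ballDirichlet_moveLaplacian_le hd hdn hm)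

lemma abs_expect_urnSum_sub_stdGaussCDF_le (hd : 2 ≤ d) (hdn : d ≤ n) (hm : 2 ≤ m)
    {Y : (Fin n → Fin m) → ℝ} (hY : Y = urnSum (Pi.single d 1)) (z : ℝ) :
    |(𝔼 ω, if (Y ω - 𝔼 y, Y y) / √(uniformVar Y) ≤ z then (1 : ℝ) else 0) - stdGaussCDF z|
      ≤ (√(3 * (5000 * d ^ 3 * (d + 1) ^ 2)) + 8 * √(3 * (16 * d ^ 3 * (d + 1) ^ 2)))
        * (1 + n / m) ^ 2 / √(uniformVar Y) := by
  have hm' : (0 : ℝ) < m := by positivity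
  have : Nonempty (Fin m) := ⟨⟨0, by omega⟩⟩
  obtain ⟨g, hg, hgY⟩ := exists_moveLaplacian_urnSum_eq (n := n) hm hdn
  have hV : 0 < uniformVar (urnSum (n := n) (m := m) (Pi.single d 1)) :=
    (div_pos (mul_pos hm' (urnProb_pos hm hdn)) (by norm_num)).trans_le
      (mul_urnProb_le_uniformVar hd hm)
  have hL := sqrt_uniformVar_moveLaplacian_le hd hdn hm
  have hΓ := sqrt_uniformVar_le hd hm (by positivity) (ballDirichlet_carreDuChamp_le hd hdn hm hg)
  rw [← hY] at hgY hV hL hΓ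
  refine (reversibleMoves_ballMove.abs_expect_sub_stdGaussCDF_le_sqrt (G := urnSum g) (K := 4 / m)
    hV (by positivity) hgY (fun ω p => (abs_urnSum_sub_ballMove_le
      (abs_fwdDiff_le (by omega) hg) ω p).trans_eq (by ring)) z).trans ?_
  rw [div_le_div_iff₀ hV (Real.sqrt_pos.2 hV)]
  set V := uniformVar Y
  set A := √(3 * (5000 * d ^ 3 * (d + 1) ^ 2))
  set B := √(3 * (16 * d ^ 3 * (d + 1) ^ 2))
  calc (√(uniformVar (carreDuChamp ballMove (urnSum g) Y))
        + 2 * (4 / m) * √(uniformVar (moveLaplacian ballMove Y))) * √V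
      ≤ (A * (1 + n / m) ^ 2 * √V + 2 * (4 / m) * (m * B * (1 + n / m) ^ 2 * √V)) * √V := by gcongr
    _ = (A + 8 * B) * (1 + n / m) ^ 2 * (√V * √V) := by
        field_simp
        ring
    _ = (A + 8 * B) * (1 + n / m) ^ 2 * V := by rw [Real.mul_self_sqrt hV.le]

lemma urnCount_eq_urnSum (d : ℕ) (ω : Fin n → Fin m) :
    (urnCount d ω : ℝ) = urnSum (Pi.single d 1) ω := by
  simp only [urnCount, urnSum, Pi.single_apply, Finset.sum_boole]

lemma integral_occ (f : (Fin n → Fin m) → ℝ) : ∫ ω, f ω ∂(occ n m) = 𝔼 ω, f ω := by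
  rw [occ, integral_smul_measure, integral_count, Fintype.expect_eq_sum_div_card]
  simp [div_eq_inv_mul]

lemma occMean_eq_expect (d : ℕ) :
    occMean d n m = 𝔼 ω : Fin n → Fin m, urnSum (Pi.single d 1) ω := by
  simp only [occMean, integral_occ, urnCount_eq_urnSum]

lemma occVar_eq_uniformVar (d : ℕ) :
    occVar d n m = uniformVar (urnSum (n := n) (m := m) (Pi.single d 1)) := by
  rw [occVar, variance_eq_integral (measurable_of_finite _).aemeasurable]
  simp only [integral_occ, urnCount_eq_urnSum, uniformVar]

lemma occ_toReal_setOf (p : (Fin n → Fin m) → Prop) [DecidablePred p] :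
    (occ n m {ω | p ω}).toReal = 𝔼 ω, if p ω then (1 : ℝ) else 0 := by
  rw [← integral_occ, ← Measure.real_def,
    ← integral_indicator_one (Set.toFinite {ω | p ω}).measurableSet]
  simp [Set.indicator_apply]

theorem abs_occKolm_le (hd : 2 ≤ d) (hdn : d ≤ n) (hm : 2 ≤ m) (z : ℝ) :
    |occKolm d n m z|
      ≤ (√(3 * (5000 * d ^ 3 * (d + 1) ^ 2)) + 8 * √(3 * (16 * d ^ 3 * (d + 1) ^ 2)))
        * (1 + n / m) ^ 2 / √(occVar d n m) := by
  rw [occKolm, occ_toReal_setOf, occMean_eq_expect, occVar_eq_uniformVar]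
  simp only [urnCount_eq_urnSum]
  exact abs_expect_urnSum_sub_stdGaussCDF_le hd hdn hm rfl z

end Occupancy

/-- Theorem 1.1: Berry–Esseen bound for the uniform multinomial occupancy model. -/
theorem occupancy_berry_esseen (d : ℕ) (hd : 2 ≤ d) :
    ∃ C : ℝ, 0 < C ∧ ∀ n m : ℕ, d ≤ n → 2 ≤ m → ∀ z : ℝ,
      |occKolm d n m z| ≤ C / occR d n m := by
  set A : ℝ := √(3 * (5000 * d ^ 3 * (d + 1) ^ 2)) + 8 * √(3 * (16 * d ^ 3 * (d + 1) ^ 2)) with hA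
  refine ⟨A * 4, by positivity, fun n m hdn hm z => (abs_occKolm_le hd hdn hm z).trans ?_⟩
  rw [← hA, occR, div_div_eq_mul_div, mul_assoc A]
  set α : ℝ := n / m
  have hα : 0 ≤ α := by positivity
  have hcube : (1 + α) ^ 2 ≤ 4 * (1 + α ^ 3) := by
    nlinarith [mul_nonneg hα (sq_nonneg (α - 1)), sq_nonneg (α - 1)]
  gcongr
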